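/- arXiv:2201.00788 — 6 statements merged into one kernel-verified Lean document; each statement's English description precedes it below -/
import Mathlib

section
/- For every pair of integers n > m ≥ 1, there exist complex polynomials p of degree n and q of degree m and a finite set S of complex numbers with cardinality at least ⌈n·√m⌉ such that every z ∈ S satisfies p(z) + conj(q(z)) = 0. (In other words, the harmonic polynomial p(z) + conj(q(z)) has at least ⌈n·√m⌉ zeros.) -/
open Polynomial Complex

/-!
For `m ≤ n` take `q = e^{iβ} (z + 1)^m` and `p = ε z^n - q` with a small `ε ≠ 0`; these have
`n * m ≥ n √m` zeros. Since `p(z) + conj (q(z)) = ε z^n - 2 i Im q(z)` and `z^n` is imaginary on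
each of the `n` lines `z = r e^{iθ}`, `θ = π (2k + 1) / (2n)`, on such a line the equation is the
single real equation `2 Im q(z) = ± ε r^n`. For `ε = 0` its solutions are the intersections of the
line with the `m` lines `Im q = 0` through `-1`. For generic `β` none of these is parallel to the
given line, so `Im q` has `m` sign changes along it. Sign changes survive a small perturbation, and
the intermediate value theorem gives `m` zeros on each line. Zeros on different lines differ because
`0`, the only common point of the lines, is not a zero: `Im q(0) = sin β`.
-/

section SignChanges

open Set Filter Topology

/-- `f` changes sign at least `m` times on `s`: its values at some `m + 1` points of `s`, in
increasing order, have alternating signs. -/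
def HasSignChangesOn {α : Type*} [Preorder α] (f : α → ℝ) (s : Set α) (m : ℕ) : Prop :=
  ∃ x : Fin (m + 1) → α, StrictMono x ∧ (∀ j, x j ∈ s) ∧
    ∀ j : Fin m, f (x j.castSucc) * f (x j.succ) < 0

namespace HasSignChangesOn

theorem of_strictMonoOn {α γ : Type*} [Preorder α] [Preorder γ] {f : α → ℝ} {g : γ → ℝ}
    {s : Set α} {t : Set γ} {m : ℕ} (h : HasSignChangesOn f s m) {u : α → γ}
    (hu : StrictMonoOn u s) (hst : MapsTo u s t) (hfg : ∀ a ∈ s, ∃ c > 0, g (u a) = c * f a) :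
    HasSignChangesOn g t m := by
  obtain ⟨x, hx, hxs, hsign⟩ := h
  refine ⟨u ∘ x, fun i j hij => hu (hxs i) (hxs j) (hx hij), fun j => hst (hxs j), fun j => ?_⟩
  obtain ⟨c, hc, hgc⟩ := hfg _ (hxs j.castSucc)
  obtain ⟨d, hd, hgd⟩ := hfg _ (hxs j.succ)
  rw [Function.comp_apply, Function.comp_apply, hgc, hgd, mul_mul_mul_comm]
  exact mul_neg_of_pos_of_neg (mul_pos hc hd) (hsign j)

theorem eventually_sub_mul {α : Type*} [Preorder α] {f : α → ℝ} {s : Set α} {m : ℕ}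
    (h : HasSignChangesOn f s m) (g : α → ℝ) :
    ∀ᶠ ε : ℝ in 𝓝 0, HasSignChangesOn (fun a => f a - ε * g a) s m := by
  obtain ⟨x, hx, hxs, hsign⟩ := h
  have hε : ∀ᶠ ε : ℝ in 𝓝 0, ∀ j : Fin m,
      (f (x j.castSucc) - ε * g (x j.castSucc)) * (f (x j.succ) - ε * g (x j.succ)) < 0 :=
    eventually_all.2 fun j =>
      ContinuousAt.eventually_lt (by fun_prop) continuousAt_const (by simpa using hsign j)
  exact hε.mono fun ε hε => ⟨x, hx, hxs, hε⟩

theorem exists_strictMono_zeros {α : Type*} [ConditionallyCompleteLinearOrder α]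
    [DenselyOrdered α] [TopologicalSpace α] [OrderTopology α] {f : α → ℝ} {s : Set α}
    [s.OrdConnected] {m : ℕ} (h : HasSignChangesOn f s m) (hf : ContinuousOn f s) :
    ∃ t : Fin m → α, StrictMono t ∧ ∀ j, t j ∈ s ∧ f (t j) = 0 := by
  obtain ⟨x, hx, hxs, hsign⟩ := h
  have hzero (j : Fin m) : ∃ t ∈ Ioo (x j.castSucc) (x j.succ), f t = 0 := by
    have hle := (hx j.castSucc_lt_succ).le
    have hfj := hf.mono (s.Icc_subset (hxs j.castSucc) (hxs j.succ))
    rcases mul_neg_iff.1 (hsign j) with ⟨hpos, hneg⟩ | ⟨hneg, hpos⟩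
    · exact intermediate_value_Ioo' hle hfj ⟨hneg, hpos⟩
    · exact intermediate_value_Ioo hle hfj ⟨hneg, hpos⟩
  choose t htx ht using hzero
  refine ⟨t, fun i j hij => ?_, fun j =>
    ⟨s.Icc_subset (hxs _) (hxs _) (Ioo_subset_Icc_self (htx j)), ht j⟩⟩
  calc t i < x i.succ := (htx i).2
    _ ≤ x j.castSucc := hx.monotone (Fin.succ_le_castSucc_iff.2 hij)
    _ < t j := (htx j).1

end HasSignChangesOn

open scoped Real

theorem hasSignChangesOn_sin {m : ℕ} {b β : ℝ} (h : Real.sin (m * b + β) ≠ 0) :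
    HasSignChangesOn (fun ψ => Real.sin (m * ψ + β)) (Ioo (b - π) b) m := by
  -- At `s = 0` these points cut `[b - π, b]` into `m` half-periods; a small `s > 0` moves the
  -- endpoints inside.
  let x (s : ℝ) (j : Fin (m + 1)) : ℝ := b - π + s + j / m * (π - 2 * s)
  have hx0 (j : Fin (m + 1)) (hm : (m : ℝ) ≠ 0) :
      Real.sin (m * x 0 j + β) = (-1) ^ (j : ℕ) * ((-1) ^ m * Real.sin (m * b + β)) := by
    rw [← Real.sin_sub_nat_mul_pi, ← Real.sin_add_nat_mul_pi]
    congr 1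
    simp only [x]
    field_simp
    ring
  have hsign : ∀ᶠ s in 𝓝[>] 0, ∀ j : Fin m,
      Real.sin (m * x s j.castSucc + β) * Real.sin (m * x s j.succ + β) < 0 := by
    refine nhdsWithin_le_nhds (eventually_all.2 fun j =>
      ContinuousAt.eventually_lt (by fun_prop) continuousAt_const ?_)
    have hm : (m : ℝ) ≠ 0 := by exact_mod_cast j.pos.ne'
    have hpos : 0 < ((-1) ^ (j : ℕ) * ((-1) ^ m * Real.sin (m * b + β))) ^ 2 := by positivity
    rw [hx0 _ hm, hx0 _ hm, Fin.val_castSucc, Fin.val_succ, pow_succ]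
    linarith
  obtain ⟨s, hs, hs0, hsπ⟩ :=
    (hsign.and (Ioo_mem_nhdsGT (show (0 : ℝ) < π / 2 by positivity))).exists
  refine ⟨x s, Fin.strictMono_iff_lt_succ.2 fun j => ?_, fun j => ?_, hs⟩
  · have hm : (0 : ℝ) < m := by exact_mod_cast j.pos
    have hlt : (j : ℝ) / m < (j + 1) / m := by gcongr; linarith
    have := mul_lt_mul_of_pos_right hlt (show 0 < π - 2 * s by linarith)
    simpa [x] using this
  · have hj0 : (0 : ℝ) ≤ j / m := by positivity
    have hj1 : (j : ℝ) / m ≤ 1 := div_le_one_of_le₀ (by exact_mod_cast j.is_le) (by positivity)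
    constructor <;> simp only [x] <;> nlinarith

end SignChanges

section Line

open Set
open scoped Real

/-- The polynomial `e^{iβ} (z + 1)^m`, whose imaginary part vanishes, for `m ≥ 1`, exactly on `m`
equally spaced lines through `-1`; the parameter `β` rotates these lines. -/
noncomputable def rotatedPow (β : ℝ) (m : ℕ) : ℂ[X] := C (exp (β * I)) * (X + 1) ^ m

theorem eval_rotatedPow (β : ℝ) (m : ℕ) (z : ℂ) :
    (rotatedPow β m).eval z = exp (β * I) * (z + 1) ^ m := by
  simp [rotatedPow]

theorem degree_rotatedPow (β : ℝ) (m : ℕ) : (rotatedPow β m).degree = m := by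
  rw [rotatedPow, degree_C_mul (exp_ne_zero _), degree_pow, ← C_1, degree_X_add_C]
  simp

/-- The coordinate `r`, along the line through `0` with direction `e^{iθ}`, of the point
`r e^{iθ}` that is seen from `-1` in the direction `e^{iψ}`. -/
noncomputable def lineCoord (θ ψ : ℝ) : ℝ := Real.sin ψ / Real.sin (θ - ψ)

theorem sin_sub_pos_of_mem_Ioo {θ ψ : ℝ} (hψ : ψ ∈ Ioo (θ - π) θ) : 0 < Real.sin (θ - ψ) :=
  Real.sin_pos_of_pos_of_lt_pi (by linarith [hψ.2]) (by linarith [hψ.1])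

-- The law of sines in the triangle with vertices `-1`, `0` and `r e^{iθ}`.
theorem lineCoord_mul_exp_add_one {θ ψ : ℝ} (h : Real.sin (θ - ψ) ≠ 0) :
    lineCoord θ ψ * exp (θ * I) + 1 = (Real.sin θ / Real.sin (θ - ψ) : ℝ) * exp (ψ * I) := by
  apply Complex.ext
  · simp only [lineCoord, add_re, re_ofReal_mul, exp_ofReal_mul_I_re, one_re]
    field_simp
    rw [Real.sin_sub]
    ring
  · simp only [lineCoord, add_im, im_ofReal_mul, exp_ofReal_mul_I_im, one_im]
    ring

theorem strictMonoOn_lineCoord {θ : ℝ} (hθ : θ ∈ Ioo 0 π) :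
    StrictMonoOn (lineCoord θ) (Ioo (θ - π) θ) := by
  intro ψ hψ ψ' hψ' hlt
  have hcross : Real.sin ψ' * Real.sin (θ - ψ) - Real.sin ψ * Real.sin (θ - ψ') =
      Real.sin θ * Real.sin (ψ' - ψ) := by
    simp only [Real.sin_sub]
    ring
  have hpos : 0 < Real.sin θ * Real.sin (ψ' - ψ) :=
    mul_pos (Real.sin_pos_of_mem_Ioo hθ)
      (Real.sin_pos_of_pos_of_lt_pi (by linarith) (by linarith [hψ.1, hψ'.2]))
  rw [lineCoord, lineCoord,
    div_lt_div_iff₀ (sin_sub_pos_of_mem_Ioo hψ) (sin_sub_pos_of_mem_Ioo hψ')]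
  linarith

theorem im_eval_rotatedPow_lineCoord (β : ℝ) (m : ℕ) {θ ψ : ℝ} (h : Real.sin (θ - ψ) ≠ 0) :
    ((rotatedPow β m).eval (lineCoord θ ψ * exp (θ * I))).im =
      (Real.sin θ / Real.sin (θ - ψ)) ^ m * Real.sin (m * ψ + β) := by
  have hpolar : (rotatedPow β m).eval (lineCoord θ ψ * exp (θ * I)) =
      ((Real.sin θ / Real.sin (θ - ψ)) ^ m : ℝ) * exp ((m * ψ + β : ℝ) * I) := by
    rw [eval_rotatedPow, lineCoord_mul_exp_add_one h, mul_pow, ← exp_nat_mul, mul_left_comm,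
      ← exp_add, ofReal_pow]
    congr 2
    push_cast
    ring
  rw [hpolar, im_ofReal_mul, exp_ofReal_mul_I_im]

theorem hasSignChangesOn_im_eval_rotatedPow {β θ : ℝ} {m : ℕ} (hθ : θ ∈ Ioo 0 π)
    (h : Real.sin (m * θ + β) ≠ 0) :
    HasSignChangesOn (fun r : ℝ => ((rotatedPow β m).eval (r * exp (θ * I))).im) univ m := by
  refine (hasSignChangesOn_sin h).of_strictMonoOn (strictMonoOn_lineCoord hθ) (mapsTo_univ _ _)
    fun ψ hψ => ?_
  have hψ := sin_sub_pos_of_mem_Ioo hψ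
  exact ⟨_, pow_pos (div_pos (Real.sin_pos_of_mem_Ioo hθ) hψ) m,
    im_eval_rotatedPow_lineCoord β m hψ.ne'⟩

theorem ofReal_mul_exp_mul_I_inj {r r' θ θ' : ℝ} (hθ : θ ∈ Ioo 0 π) (hθ' : θ' ∈ Ioo 0 π)
    (hr : r ≠ 0) (h : (r * exp (θ * I) : ℂ) = r' * exp (θ' * I)) : θ = θ' ∧ r = r' := by
  have hre := congrArg re h
  have him := congrArg im h
  simp only [re_ofReal_mul, im_ofReal_mul, exp_ofReal_mul_I_re, exp_ofReal_mul_I_im] at hre him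
  have hsin : Real.sin (θ - θ') = 0 := by
    apply mul_left_cancel₀ hr
    rw [Real.sin_sub]
    linear_combination Real.cos θ' * him - Real.sin θ' * hre
  obtain rfl : θ = θ' := sub_eq_zero.1 <| (Real.sin_eq_zero_iff_of_lt_of_lt
    (by linarith [hθ.1, hθ'.2]) (by linarith [hθ.2, hθ'.1])).1 hsin
  exact ⟨rfl, by exact_mod_cast mul_right_cancel₀ (exp_ne_zero _) h⟩

end Line

section LineAngle

open Set
open scoped Real

/-- The angle of the `k`-th of the `n` lines through `0` on which `z ^ n` is imaginary. -/
noncomputable def lineAngle (n k : ℕ) : ℝ := (2 * k + 1) * π / (2 * n)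

theorem lineAngle_mem_Ioo {n k : ℕ} (hk : k < n) : lineAngle n k ∈ Ioo 0 π := by
  have hn : (0 : ℝ) < n := by exact_mod_cast k.zero_le.trans_lt hk
  have hk : (k : ℝ) + 1 ≤ n := by exact_mod_cast hk
  refine ⟨by unfold lineAngle; positivity, ?_⟩
  rw [lineAngle, div_lt_iff₀ (by positivity)]
  nlinarith [Real.pi_pos]

theorem lineAngle_injective {n : ℕ} (hn : n ≠ 0) : Function.Injective (lineAngle n) := by
  intro k l h
  rw [lineAngle, lineAngle, div_left_inj' (by positivity), mul_left_inj' Real.pi_ne_zero] at h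
  exact_mod_cast mul_left_cancel₀ two_ne_zero (add_right_cancel h)

theorem exp_lineAngle_mul_I_pow {n : ℕ} (hn : n ≠ 0) (k : ℕ) :
    exp (lineAngle n k * I) ^ n = (-1) ^ k * I := by
  have hangle : (n : ℂ) * (lineAngle n k * I) = k * (π * I) + π / 2 * I := by
    rw [lineAngle]
    push_cast
    field_simp
  rw [← exp_nat_mul, hangle, exp_add, exp_nat_mul, exp_pi_mul_I, exp_pi_div_two_mul_I]

theorem sin_odd_mul_pi_div_ne_zero {a : ℤ} (ha : Odd a) {n : ℕ} (hn : n ≠ 0) :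
    Real.sin (a * π / (2 * n)) ≠ 0 := by
  intro h
  obtain ⟨k, hk⟩ := Real.sin_eq_zero_iff.1 h
  rw [eq_div_iff (by positivity), mul_right_comm, mul_left_inj' Real.pi_ne_zero] at hk
  have hak : k * (2 * n) = a := by exact_mod_cast hk
  exact Int.not_even_iff_odd.2 ha ⟨k * n, by linarith⟩

theorem sin_pi_div_four_mul_ne_zero {n : ℕ} (hn : n ≠ 0) : Real.sin (π / (4 * n)) ≠ 0 := by
  convert sin_odd_mul_pi_div_ne_zero odd_one (mul_ne_zero two_ne_zero hn) using 2
  push_cast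
  ring

theorem sin_mul_lineAngle_add_ne_zero {n : ℕ} (hn : n ≠ 0) (m k : ℕ) :
    Real.sin (m * lineAngle n k + π / (4 * n)) ≠ 0 := by
  have hodd : Odd (2 * (m * (2 * k + 1)) + 1 : ℤ) := ⟨_, rfl⟩
  convert sin_odd_mul_pi_div_ne_zero hodd (mul_ne_zero two_ne_zero hn) using 2
  rw [lineAngle]
  push_cast
  field_simp
  ring

end LineAngle

section Valence

open Filter Topology
open scoped Real

theorem exists_injective_zeros_on_lines {n m : ℕ} (hn : n ≠ 0) {β : ℝ} (hβ : Real.sin β ≠ 0)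
    (hβθ : ∀ k, Real.sin (m * lineAngle n k + β) ≠ 0) :
    ∃ ε : ℝ, ε ≠ 0 ∧ ∀ k : Fin n, ∃ t : Fin m → ℝ, Function.Injective t ∧ ∀ j, t j ≠ 0 ∧
      ε * (t j * exp (lineAngle n k * I)) ^ n =
        (2 * ((rotatedPow β m).eval (t j * exp (lineAngle n k * I))).im : ℝ) * I := by
  let F (k : Fin n) (r : ℝ) : ℝ := ((rotatedPow β m).eval (r * exp (lineAngle n k * I))).im
  let H (k : Fin n) (r : ℝ) : ℝ := (-1) ^ (k : ℕ) * r ^ n / 2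
  have hF0 (k : Fin n) : F k 0 = Real.sin β := by
    simp [F, eval_rotatedPow, exp_ofReal_mul_I_im]
  have hsign : ∀ᶠ ε : ℝ in 𝓝[≠] 0, ∀ k, HasSignChangesOn (fun r => F k r - ε * H k r) .univ m :=
    nhdsWithin_le_nhds <| eventually_all.2 fun k =>
      (hasSignChangesOn_im_eval_rotatedPow (lineAngle_mem_Ioo k.is_lt)
        (hβθ k)).eventually_sub_mul (H k)
  obtain ⟨ε, hε, hε0⟩ := (hsign.and self_mem_nhdsWithin).exists
  refine ⟨ε, hε0, fun k => ?_⟩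
  have hcont : Continuous fun r => F k r - ε * H k r := by fun_prop
  obtain ⟨t, ht, htzero⟩ := (hε k).exists_strictMono_zeros hcont.continuousOn
  refine ⟨t, ht.injective, fun j => ⟨fun htj => hβ ?_, ?_⟩⟩
  · simpa [htj, H, hn, hF0] using (htzero j).2
  · have hFH : F k (t j) = ε * H k (t j) := sub_eq_zero.1 (htzero j).2
    change _ = ((2 * F k (t j) : ℝ) : ℂ) * I
    rw [hFH, mul_pow, exp_lineAngle_mul_I_pow hn]
    simp only [H]
    push_cast
    ring

theorem exists_card_eq_mul_forall_mul_pow_eq_im {n m : ℕ} (hn : n ≠ 0) {β : ℝ} (hβ : Real.sin β ≠ 0)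
    (hβθ : ∀ k, Real.sin (m * lineAngle n k + β) ≠ 0) :
    ∃ ε : ℝ, ε ≠ 0 ∧ ∃ S : Finset ℂ, S.card = n * m ∧
      ∀ z ∈ S, ε * z ^ n = (2 * ((rotatedPow β m).eval z).im : ℝ) * I := by
  obtain ⟨ε, hε, h⟩ := exists_injective_zeros_on_lines hn hβ hβθ
  choose t htinj ht0 htzero using fun k => h k
  let z (a : Fin n × Fin m) : ℂ := t a.1 a.2 * exp (lineAngle n a.1 * I)
  have hz : Function.Injective z := by
    rintro ⟨k, j⟩ ⟨l, i⟩ hkl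
    obtain ⟨hangle, hcoord⟩ := ofReal_mul_exp_mul_I_inj (lineAngle_mem_Ioo k.is_lt)
      (lineAngle_mem_Ioo l.is_lt) (ht0 k j) hkl
    obtain rfl := Fin.ext (lineAngle_injective hn hangle)
    obtain rfl := htinj k hcoord
    rfl
  refine ⟨ε, hε, Finset.univ.image z, ?_, ?_⟩
  · simp [Finset.card_image_of_injective _ hz]
  · simp only [Finset.forall_mem_image, Finset.mem_univ, forall_true_left, Prod.forall]
    exact htzero

theorem degree_C_mul_X_pow_sub_rotatedPow {n m : ℕ} (hmn : m ≤ n) {ε β : ℝ} (hε : ε ≠ 0)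
    (hβ : Real.sin β ≠ 0) : (C (ε : ℂ) * X ^ n - rotatedPow β m).degree = (n : WithBot ℕ) := by
  refine degree_eq_of_le_of_coeff_ne_zero ?_ fun hcoeff => ?_
  · refine (degree_sub_le _ _).trans (max_le (degree_C_mul_X_pow_le n _) ?_)
    rw [degree_rotatedPow]
    exact_mod_cast hmn
  · have h : (ε : ℂ) - exp (β * I) * m.choose n = 0 := by
      simpa [rotatedPow, coeff_X_add_one_pow] using hcoeff
    have him : (m.choose n : ℝ) = 0 := by
      simpa [exp_ofReal_mul_I_im, hβ] using congrArg im h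
    have him' : (m.choose n : ℂ) = 0 := by exact_mod_cast him
    simp [him', hε] at h

theorem exists_card_zeros_eq_mul_of_le {n m : ℕ} (hmn : m ≤ n) :
    ∃ (p q : ℂ[X]) (S : Finset ℂ), p.degree = n ∧ q.degree = m ∧ S.card = n * m ∧
      ∀ z ∈ S, p.eval z + (starRingEnd ℂ) (q.eval z) = 0 := by
  rcases eq_or_ne n 0 with rfl | hn
  · obtain rfl := Nat.le_zero.1 hmn
    exact ⟨1, 1, ∅, by simp, by simp, by simp, by simp⟩
  have hβ := sin_pi_div_four_mul_ne_zero hn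
  obtain ⟨ε, hε, S, hcard, hS⟩ :=
    exists_card_eq_mul_forall_mul_pow_eq_im hn hβ (sin_mul_lineAngle_add_ne_zero hn m)
  refine ⟨C (ε : ℂ) * X ^ n - rotatedPow (π / (4 * n)) m, rotatedPow (π / (4 * n)) m, S,
    degree_C_mul_X_pow_sub_rotatedPow hmn hε hβ, degree_rotatedPow _ m, hcard, fun z hz => ?_⟩
  have hconj := sub_conj ((rotatedPow (π / (4 * n)) m).eval z)
  rw [← hS z hz] at hconj
  simp only [eval_sub, eval_mul, eval_C, eval_pow, eval_X]
  linear_combination -hconj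

theorem valence_ge_n_sqrt_m_general (n m : ℕ) :
    ∃ (p q : ℂ[X]) (S : Finset ℂ), p.degree = n ∧ q.degree = m ∧ S.card = n * m ∧
      ∀ z ∈ S, p.eval z + (starRingEnd ℂ) (q.eval z) = 0 := by
  rcases le_total m n with hmn | hnm
  · exact exists_card_zeros_eq_mul_of_le hmn
  · obtain ⟨q, p, S, hq, hp, hcard, hS⟩ := exists_card_zeros_eq_mul_of_le hnm
    refine ⟨p, q, S, hp, hq, hcard.trans (mul_comm m n), fun z hz => ?_⟩
    simpa [add_comm] using congrArg (starRingEnd ℂ) (hS z hz)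

theorem ceil_mul_sqrt_le_mul (n m : ℕ) : ⌈(n : ℝ) * √m⌉ ≤ ((n * m : ℕ) : ℤ) := by
  have hm : √(m : ℝ) ≤ m := Real.sqrt_le_self_iff.2 <| by
    exact_mod_cast Nat.eq_zero_or_pos m
  rw [Int.ceil_le]
  push_cast
  gcongr

end Valence

/-- For every pair of integers `n > m ≥ 1`, there exist complex polynomials `p` of degree `n`
and `q` of degree `m` and a finite set `S` of complex numbers with cardinality at least
`⌈n·√m⌉` such that every `z ∈ S` satisfies `p(z) + conj(q(z)) = 0`. -/
theorem valence_ge_n_sqrt_m (n m : ℕ) (hm : 1 ≤ m) (hmn : m < n) :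
    ∃ (p q : Polynomial ℂ) (S : Finset ℂ),
      p.degree = n ∧ q.degree = m ∧
      ⌈(n : ℝ) * Real.sqrt m⌉ ≤ (S.card : ℤ) ∧
      ∀ z ∈ S, p.eval z + (starRingEnd ℂ) (q.eval z) = 0 := by
  obtain ⟨p, q, S, hp, hq, hcard, hS⟩ := valence_ge_n_sqrt_m_general n m
  exact ⟨p, q, S, hp, hq, hcard ▸ ceil_mul_sqrt_le_mul n m, hS⟩
end

section
/- For every integer m > 9 there exists N₀ such that for all integers n ≥ N₀ (with n > m) there exist complex polynomials p of degree n and q of degree m and a finite set S of complex numbers with cardinality strictly greater than 3n − 2 + m(m − 1) such that every z ∈ S satisfies p(z) + conj(q(z)) = 0. (These are counterexamples to Wilmshurst's conjecture that the maximum valence equals 3n − 2 + m(m−1).) -/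
open Polynomial Complex

/-!
Take `q = (1 - X) ^ m` and `p = 2ε X ^ n - q` with `ε > 0` tiny, so that
`p(z) + conj(q(z)) = 2 (ε z ^ n - i Im q(z))`. On each ray from `0` on which `z ^ n` is purely
imaginary, the complex equation becomes the single real one `ε Im(z ^ n) = Im q(z)`, and for small
`ε` every sign change of `Im q` along the ray produces a zero.

The set `Im q = 0` consists of `m` lines through `1`. A ray at angle `θ ∈ (0, π)` crosses about
`(1 - θ / π) m` of their upper halves, and there are `n` such rays, so the upper half plane contains
about `n (m - 1) ^ 2 / (2m)` zeros. Reflection in the real axis doubles this number, and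
`(m - 1) ^ 2 / m > 3` as soon as `m ≥ 5`. To tell the zeros apart, a point of the upper half plane
is described by its angles at the vertices `0` and `1` of the triangle that it forms with them.
-/

section SignChange

open Set Topology

variable {α : Type*} [ConditionallyCompleteLinearOrder α] [DenselyOrdered α] [TopologicalSpace α]
  [OrderTopology α] {a b : α}

lemma exists_mem_Ioo_eq_zero_of_mul_neg {f : α → ℝ} (hab : a ≤ b)
    (hf : ContinuousOn f (Icc a b)) (hsign : f a * f b < 0) : ∃ x ∈ Ioo a b, f x = 0 := by
  rcases mul_neg_iff.1 hsign with ⟨ha, hb⟩ | ⟨ha, hb⟩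
  · exact intermediate_value_Ioo' hab hf ⟨hb, ha⟩
  · exact intermediate_value_Ioo hab hf ⟨ha, hb⟩

lemma eventually_exists_mem_Ioo_mul_eq {f g : α → ℝ} (hab : a ≤ b)
    (hf : ContinuousOn f (Icc a b)) (hg : ContinuousOn g (Icc a b)) (hsign : g a * g b < 0) :
    ∀ᶠ ε in 𝓝 (0 : ℝ), ∃ x ∈ Ioo a b, ε * f x = g x := by
  have hcont : Continuous fun ε : ℝ ↦ (ε * f a - g a) * (ε * f b - g b) := by fun_prop
  have hev : ∀ᶠ ε in 𝓝 (0 : ℝ), (ε * f a - g a) * (ε * f b - g b) < 0 :=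
    hcont.continuousAt.eventually_lt_const (by simpa using hsign)
  filter_upwards [hev] with ε hε
  obtain ⟨x, hx, hzero⟩ :=
    exists_mem_Ioo_eq_zero_of_mul_neg hab ((hf.const_mul ε).sub hg) hε
  exact ⟨x, hx, sub_eq_zero.1 hzero⟩

end SignChange

section Triangle

open Set

lemma ofReal_mul_exp_mul_I_pow (r φ : ℝ) (n : ℕ) :
    (r * exp (φ * I)) ^ n = (r ^ n : ℝ) * exp ((n * φ : ℝ) * I) := by
  rw [mul_pow, ← exp_nat_mul]
  push_cast
  ring_nf

lemma arg_ofReal_mul_exp_mul_I {r φ : ℝ} (hr : 0 < r) (hφ : φ ∈ Ioc (-Real.pi) Real.pi) :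
    arg (r * exp (φ * I)) = φ := by
  rw [exp_mul_I, arg_mul_cos_add_sin_mul_I hr hφ]

/-- The apex of the triangle on the base from `0` to `1` with angle `θ` at `0` and `ψ` at `1`; its
distance from `0` is given by the law of sines. Junk value `0` when `sin (θ + ψ) = 0`. -/
noncomputable def triangleApex (θ ψ : ℝ) : ℂ :=
  (Real.sin ψ / Real.sin (θ + ψ) : ℝ) * exp (θ * I)

/-- `θ` and `ψ` are two of the angles of a nondegenerate triangle; on such pairs `triangleApex` is
injective, with values in the upper half plane. -/
structure IsTrianglePair (θ ψ : ℝ) : Prop where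
  left_pos : 0 < θ
  right_pos : 0 < ψ
  add_lt_pi : θ + ψ < Real.pi

variable {θ ψ : ℝ}

namespace IsTrianglePair

lemma sin_left_pos (h : IsTrianglePair θ ψ) : 0 < Real.sin θ :=
  Real.sin_pos_of_pos_of_lt_pi h.left_pos (by linarith [h.right_pos, h.add_lt_pi])

lemma sin_right_pos (h : IsTrianglePair θ ψ) : 0 < Real.sin ψ :=
  Real.sin_pos_of_pos_of_lt_pi h.right_pos (by linarith [h.left_pos, h.add_lt_pi])

lemma sin_add_pos (h : IsTrianglePair θ ψ) : 0 < Real.sin (θ + ψ) :=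
  Real.sin_pos_of_pos_of_lt_pi (add_pos h.left_pos h.right_pos) h.add_lt_pi

end IsTrianglePair

lemma one_sub_triangleApex (h : Real.sin (θ + ψ) ≠ 0) :
    1 - triangleApex θ ψ =
      (Real.sin θ / Real.sin (θ + ψ) : ℝ) * exp ((-ψ : ℝ) * I) := by
  apply Complex.ext
  · rw [triangleApex, sub_re, one_re, re_ofReal_mul, re_ofReal_mul, exp_ofReal_mul_I_re,
      exp_ofReal_mul_I_re, Real.cos_neg]
    field_simp
    rw [Real.sin_add]
    ring
  · rw [triangleApex, sub_im, one_im, im_ofReal_mul, im_ofReal_mul, exp_ofReal_mul_I_im,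
      exp_ofReal_mul_I_im, Real.sin_neg]
    ring

lemma triangleApex_im_pos (h : IsTrianglePair θ ψ) : 0 < (triangleApex θ ψ).im := by
  rw [triangleApex, im_ofReal_mul, exp_ofReal_mul_I_im]
  exact mul_pos (div_pos h.sin_right_pos h.sin_add_pos) h.sin_left_pos

lemma arg_triangleApex (h : IsTrianglePair θ ψ) : arg (triangleApex θ ψ) = θ :=
  arg_ofReal_mul_exp_mul_I (div_pos h.sin_right_pos h.sin_add_pos)
    ⟨by linarith [h.left_pos, Real.pi_pos], by linarith [h.right_pos, h.add_lt_pi]⟩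

lemma arg_one_sub_triangleApex (h : IsTrianglePair θ ψ) : arg (1 - triangleApex θ ψ) = -ψ := by
  rw [one_sub_triangleApex h.sin_add_pos.ne']
  exact arg_ofReal_mul_exp_mul_I (div_pos h.sin_left_pos h.sin_add_pos)
    ⟨by linarith [h.left_pos, h.add_lt_pi], by linarith [h.right_pos, Real.pi_pos]⟩

lemma triangleApex_inj {θ' ψ' : ℝ} (h : IsTrianglePair θ ψ) (h' : IsTrianglePair θ' ψ') :
    triangleApex θ ψ = triangleApex θ' ψ' ↔ θ = θ' ∧ ψ = ψ' := by
  refine ⟨fun heq ↦ ⟨?_, neg_injective ?_⟩, fun ⟨hθ, hψ⟩ ↦ by rw [hθ, hψ]⟩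
  · rw [← arg_triangleApex h, ← arg_triangleApex h', heq]
  · rw [← arg_one_sub_triangleApex h, ← arg_one_sub_triangleApex h', heq]

lemma triangleApex_pow_re (θ ψ : ℝ) (n : ℕ) :
    (triangleApex θ ψ ^ n).re = (Real.sin ψ / Real.sin (θ + ψ)) ^ n * Real.cos (n * θ) := by
  rw [triangleApex, ofReal_mul_exp_mul_I_pow, re_ofReal_mul, exp_ofReal_mul_I_re]

lemma one_sub_triangleApex_pow_im (h : Real.sin (θ + ψ) ≠ 0) (m : ℕ) :
    ((1 - triangleApex θ ψ) ^ m).im =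
      -((Real.sin θ / Real.sin (θ + ψ)) ^ m * Real.sin (m * ψ)) := by
  rw [one_sub_triangleApex h, ofReal_mul_exp_mul_I_pow, im_ofReal_mul, exp_ofReal_mul_I_im,
    mul_neg, Real.sin_neg, mul_neg]

lemma continuousOn_triangleApex (θ : ℝ) :
    ContinuousOn (triangleApex θ) {ψ | Real.sin (θ + ψ) ≠ 0} := by
  unfold triangleApex
  have hquot : ContinuousOn (fun ψ ↦ Real.sin ψ / Real.sin (θ + ψ))
      {ψ | Real.sin (θ + ψ) ≠ 0} :=
    ContinuousOn.div (by fun_prop) (by fun_prop) fun _ hψ ↦ hψ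
  exact (continuous_ofReal.comp_continuousOn hquot).mul continuousOn_const

end Triangle

section HalfOddAngle

/-- The `k`-th positive zero, counted from `0`, of `x ↦ cos (n x)`; junk value `0` when `n = 0`. -/
noncomputable def halfOddAngle (n k : ℕ) : ℝ :=
  (2 * k + 1) * Real.pi / (2 * n)

variable {m n : ℕ}

lemma natCast_mul_halfOddAngle (hn : n ≠ 0) (k : ℕ) :
    n * halfOddAngle n k = Real.pi / 2 + k * Real.pi := by
  have : (n : ℝ) ≠ 0 := Nat.cast_ne_zero.2 hn
  unfold halfOddAngle
  field_simp
  ring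

lemma sin_mul_halfOddAngle (hn : n ≠ 0) (k : ℕ) :
    Real.sin (n * halfOddAngle n k) = (-1) ^ k := by
  rw [natCast_mul_halfOddAngle hn, Real.sin_add_nat_mul_pi, Real.sin_pi_div_two, mul_one]

lemma cos_mul_halfOddAngle (hn : n ≠ 0) (k : ℕ) : Real.cos (n * halfOddAngle n k) = 0 := by
  rw [natCast_mul_halfOddAngle hn, Real.cos_add_nat_mul_pi, Real.cos_pi_div_two, mul_zero]

lemma halfOddAngle_pos (hn : n ≠ 0) (k : ℕ) : 0 < halfOddAngle n k := by
  unfold halfOddAngle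
  positivity

lemma strictMono_halfOddAngle (hn : n ≠ 0) : StrictMono (halfOddAngle n) := by
  intro j k hjk
  unfold halfOddAngle
  gcongr

lemma halfOddAngle_add_halfOddAngle_lt_pi (hm : m ≠ 0) (hn : n ≠ 0) {i j : ℕ}
    (h : (2 * i + 1) * m + (2 * j + 1) * n < 2 * m * n) :
    halfOddAngle n i + halfOddAngle m j < Real.pi := by
  have hcast : ((2 * i + 1) * m + (2 * j + 1) * n : ℝ) < 2 * m * n := by exact_mod_cast h
  calc halfOddAngle n i + halfOddAngle m j
      = ((2 * i + 1) * m + (2 * j + 1) * n) / (2 * m * n) * Real.pi := by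
        unfold halfOddAngle
        field_simp
    _ < 1 * Real.pi := by
        gcongr
        exact (div_lt_one (by positivity)).2 hcast
    _ = Real.pi := one_mul _

end HalfOddAngle

section Zeros

open Set Topology

variable {m n : ℕ}

lemma one_sub_triangleApex_pow_im_mul_neg (hm : m ≠ 0) {θ : ℝ} (hθ : 0 < θ) {i : ℕ}
    (h : θ + halfOddAngle m (i + 1) < Real.pi) :
    ((1 - triangleApex θ (halfOddAngle m i)) ^ m).im *
      ((1 - triangleApex θ (halfOddAngle m (i + 1))) ^ m).im < 0 := by
  have hlt : halfOddAngle m i < halfOddAngle m (i + 1) :=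
    strictMono_halfOddAngle hm (Nat.lt_succ_self i)
  have hpair₀ : IsTrianglePair θ (halfOddAngle m i) := ⟨hθ, halfOddAngle_pos hm i, by linarith⟩
  have hpair₁ : IsTrianglePair θ (halfOddAngle m (i + 1)) := ⟨hθ, halfOddAngle_pos hm (i + 1), h⟩
  rw [one_sub_triangleApex_pow_im hpair₀.sin_add_pos.ne',
    one_sub_triangleApex_pow_im hpair₁.sin_add_pos.ne',
    sin_mul_halfOddAngle hm, sin_mul_halfOddAngle hm]
  have hdist₀ := div_pos hpair₀.sin_left_pos hpair₀.sin_add_pos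
  have hdist₁ := div_pos hpair₁.sin_left_pos hpair₁.sin_add_pos
  set r₀ := Real.sin θ / Real.sin (θ + halfOddAngle m i)
  set r₁ := Real.sin θ / Real.sin (θ + halfOddAngle m (i + 1))
  calc -(r₀ ^ m * (-1) ^ i) * -(r₁ ^ m * (-1) ^ (i + 1))
      = -(r₀ ^ m * r₁ ^ m * ((-1) ^ i) ^ 2) := by ring
    _ < 0 := neg_neg_of_pos (by positivity)

lemma eventually_exists_mul_triangleApex_pow_im_eq (hm : m ≠ 0) (n : ℕ) {θ : ℝ} (hθ : 0 < θ)
    {i : ℕ} (h : θ + halfOddAngle m (i + 1) < Real.pi) :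
    ∀ᶠ ε in 𝓝 (0 : ℝ), ∃ ψ ∈ Ioo (halfOddAngle m i) (halfOddAngle m (i + 1)),
      ε * (triangleApex θ ψ ^ n).im = ((1 - triangleApex θ ψ) ^ m).im := by
  have hcont : ContinuousOn (triangleApex θ) (Icc (halfOddAngle m i) (halfOddAngle m (i + 1))) := by
    refine (continuousOn_triangleApex θ).mono fun ψ hψ ↦ ?_
    have hψ₀ : 0 < ψ := (halfOddAngle_pos hm i).trans_le hψ.1
    have hpair : IsTrianglePair θ ψ := ⟨hθ, hψ₀, by linarith [hψ.2]⟩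
    exact hpair.sin_add_pos.ne'
  exact eventually_exists_mem_Ioo_mul_eq
    ((strictMono_halfOddAngle hm).monotone (Nat.le_succ i))
    (continuous_im.comp_continuousOn (hcont.pow n))
    (continuous_im.comp_continuousOn ((continuousOn_const.sub hcont).pow m))
    (one_sub_triangleApex_pow_im_mul_neg hm hθ h)

/-- The zeros constructed in the upper half plane: `⟨i, j⟩` stands for the one on the ray at angle
`halfOddAngle n j` from `0` whose angle at `1` lies between `halfOddAngle m i` and
`halfOddAngle m (i + 1)`. The bound on `j` makes these angles fit into a triangle. -/
def zeroIndices (m n : ℕ) : Finset (Σ _ : ℕ, ℕ) :=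
  (Finset.range (m - 1)).sigma fun i ↦ Finset.range ((2 * (m - 2 - i) + 1) * n / (2 * m))

lemma halfOddAngle_add_lt_pi_of_mem_zeroIndices (hm : m ≠ 0) (hn : n ≠ 0) {x : Σ _ : ℕ, ℕ}
    (hx : x ∈ zeroIndices m n) :
    halfOddAngle n x.2 + halfOddAngle m (x.1 + 1) < Real.pi := by
  obtain ⟨i, j⟩ := x
  obtain ⟨hi, hj⟩ : i < m - 1 ∧ j < (2 * (m - 2 - i) + 1) * n / (2 * m) := by
    simpa only [zeroIndices, Finset.mem_sigma, Finset.mem_range] using hx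
  obtain ⟨k, rfl⟩ : ∃ k, m = i + k + 2 := ⟨m - 2 - i, by omega⟩
  have hj' : (j + 1) * (2 * (i + k + 2)) ≤ (2 * k + 1) * n := by
    rw [show i + k + 2 - 2 - i = k by omega] at hj
    exact (Nat.le_div_iff_mul_le (by positivity)).1 hj
  apply halfOddAngle_add_halfOddAngle_lt_pi hm hn
  dsimp only
  nlinarith

lemma sum_range_two_mul_add_one (d : ℕ) : ∑ i ∈ Finset.range d, (2 * i + 1) = d ^ 2 := by
  induction d with
  | zero => rfl
  | succ d ih => rw [Finset.sum_range_succ, ih]; ring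

lemma le_card_zeroIndices (hm : m ≠ 0) (n : ℕ) :
    (m - 1) ^ 2 * n ≤ 2 * m * ((zeroIndices m n).card + (m - 1)) := by
  have hcard : (zeroIndices m n).card =
      ∑ i ∈ Finset.range (m - 1), (2 * i + 1) * n / (2 * m) := by
    simp only [zeroIndices, Finset.card_sigma, Finset.card_range]
    exact Finset.sum_range_reflect (fun i ↦ (2 * i + 1) * n / (2 * m)) (m - 1)
  calc (m - 1) ^ 2 * n
      = ∑ i ∈ Finset.range (m - 1), (2 * i + 1) * n := by
        rw [← Finset.sum_mul, sum_range_two_mul_add_one]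
    _ ≤ ∑ i ∈ Finset.range (m - 1), 2 * m * ((2 * i + 1) * n / (2 * m) + 1) :=
        Finset.sum_le_sum fun i _ ↦ (Nat.lt_mul_div_succ _ (by positivity)).le
    _ = 2 * m * ((zeroIndices m n).card + (m - 1)) := by
        rw [← Finset.mul_sum, Finset.sum_add_distrib, hcard, Finset.sum_const, Finset.card_range,
          smul_eq_mul, mul_one]

lemma zeroIndex_ext (hm : m ≠ 0) (hn : n ≠ 0) {x y : Σ _ : ℕ, ℕ} {ψ : ℝ}
    (hθ : halfOddAngle n x.2 = halfOddAngle n y.2)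
    (hx : ψ ∈ Ioo (halfOddAngle m x.1) (halfOddAngle m (x.1 + 1)))
    (hy : ψ ∈ Ioo (halfOddAngle m y.1) (halfOddAngle m (y.1 + 1))) : x = y := by
  have hfst : x.1 = y.1 :=
    (strictMono_halfOddAngle hm).monotone.pairwise_disjoint_on_Ioo_succ.eq
      (not_disjoint_iff.2 ⟨ψ, hx, hy⟩)
  have hsnd : x.2 = y.2 := (strictMono_halfOddAngle hn).injective hθ
  exact Sigma.ext hfst (heq_of_eq hsnd)

lemma exists_finset_upperHalfPlane_zeros (hm : m ≠ 0) (hn : n ≠ 0) :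
    ∃ ε : ℝ, 0 < ε ∧ ∃ S : Finset ℂ, S.card = (zeroIndices m n).card ∧
      ∀ z ∈ S, 0 < z.im ∧ (z ^ n).re = 0 ∧ ε * (z ^ n).im = ((1 - z) ^ m).im := by
  have hev : ∀ᶠ ε in 𝓝 (0 : ℝ), ∀ x ∈ zeroIndices m n,
      ∃ ψ ∈ Ioo (halfOddAngle m x.1) (halfOddAngle m (x.1 + 1)),
        ε * (triangleApex (halfOddAngle n x.2) ψ ^ n).im =
          ((1 - triangleApex (halfOddAngle n x.2) ψ) ^ m).im :=
    (Finset.eventually_all _).2 fun x hx ↦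
      eventually_exists_mul_triangleApex_pow_im_eq hm n (halfOddAngle_pos hn x.2)
        (halfOddAngle_add_lt_pi_of_mem_zeroIndices hm hn hx)
  have hev_pos : ∀ᶠ ε in 𝓝[>] (0 : ℝ), 0 < ε := eventually_mem_nhdsWithin
  obtain ⟨ε, hε, hzeros⟩ := (hev_pos.and (hev.filter_mono nhdsWithin_le_nhds)).exists
  choose! ψ hψ hψeq using hzeros
  have hpair : ∀ x ∈ zeroIndices m n, IsTrianglePair (halfOddAngle n x.2) (ψ x) := fun x hx ↦
    ⟨halfOddAngle_pos hn x.2, (halfOddAngle_pos hm x.1).trans (hψ x hx).1,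
      (add_lt_add_right (hψ x hx).2 _).trans
        (halfOddAngle_add_lt_pi_of_mem_zeroIndices hm hn hx)⟩
  have hinj : InjOn (fun x ↦ triangleApex (halfOddAngle n x.2) (ψ x)) (zeroIndices m n) := by
    intro x hx y hy hxy
    obtain ⟨hθ, hψxy⟩ := (triangleApex_inj (hpair x hx) (hpair y hy)).1 hxy
    exact zeroIndex_ext hm hn hθ (hψ x hx) (hψxy ▸ hψ y hy)
  refine ⟨ε, hε, _, Finset.card_image_of_injOn hinj, ?_⟩
  simp only [Finset.forall_mem_image]
  refine fun x hx ↦ ⟨triangleApex_im_pos (hpair x hx), ?_, hψeq x hx⟩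
  rw [triangleApex_pow_re, cos_mul_halfOddAngle hn, mul_zero]

end Zeros

section HarmonicPolynomial

variable {m n : ℕ} {ε : ℝ}

/-- The analytic part of the harmonic polynomial `2ε z ^ n - (1 - z) ^ m + conj ((1 - z) ^ m)`. -/
noncomputable def analyticPart (m n : ℕ) (ε : ℝ) : ℂ[X] :=
  C (2 * (ε : ℂ)) * X ^ n - (1 - X) ^ m

lemma degree_one_sub_X_pow (R : Type*) [Ring R] [IsDomain R] (m : ℕ) :
    ((1 - X) ^ m : R[X]).degree = m := by
  rw [degree_pow, ← neg_sub, degree_neg, ← C_1, degree_X_sub_C, nsmul_one]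

lemma degree_analyticPart (hmn : m < n) (hε : ε ≠ 0) : (analyticPart m n ε).degree = n := by
  have hlead : (C (2 * (ε : ℂ)) * X ^ n : ℂ[X]).degree = n :=
    degree_C_mul_X_pow n (mul_ne_zero two_ne_zero (ofReal_ne_zero.2 hε))
  rw [analyticPart, degree_sub_eq_left_of_degree_lt, hlead]
  rw [hlead, degree_one_sub_X_pow]
  exact_mod_cast hmn

lemma eval_analyticPart_add_conj_eq_zero {z : ℂ} (hre : (z ^ n).re = 0)
    (him : ε * (z ^ n).im = ((1 - z) ^ m).im) :
    (analyticPart m n ε).eval z + starRingEnd ℂ (((1 - X) ^ m : ℂ[X]).eval z) = 0 := by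
  have hpow : z ^ n = (z ^ n).im * I := by
    simpa only [hre, ofReal_zero, zero_add] using (re_add_im (z ^ n)).symm
  simp only [analyticPart, eval_sub, eval_mul, eval_C, eval_pow, eval_X, eval_one]
  calc 2 * ε * z ^ n - (1 - z) ^ m + starRingEnd ℂ ((1 - z) ^ m)
      = 2 * ε * z ^ n - ((1 - z) ^ m - starRingEnd ℂ ((1 - z) ^ m)) := by ring
    _ = 2 * ε * ((z ^ n).im * I) - (2 * (ε * (z ^ n).im) : ℝ) * I := by
        rw [sub_conj, ← him, ← hpow]
    _ = 0 := by push_cast; ring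

lemma eval_analyticPart_add_conj_eq_zero_of_conj {z : ℂ} (hre : (z ^ n).re = 0)
    (him : ε * (z ^ n).im = ((1 - z) ^ m).im) :
    (analyticPart m n ε).eval (starRingEnd ℂ z) +
      starRingEnd ℂ (((1 - X) ^ m : ℂ[X]).eval (starRingEnd ℂ z)) = 0 := by
  apply eval_analyticPart_add_conj_eq_zero
  · rw [← map_pow, conj_re, hre]
  · rw [← map_pow, conj_im, mul_neg, him, ← map_one (starRingEnd ℂ), ← map_sub, ← map_pow, conj_im,
      map_one]

lemma card_union_image_conj {S : Finset ℂ} (hS : ∀ z ∈ S, 0 < z.im) :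
    (S ∪ S.image (starRingEnd ℂ)).card = 2 * S.card := by
  have hdisj : Disjoint S (S.image (starRingEnd ℂ)) := by
    simp only [Finset.disjoint_right, Finset.forall_mem_image]
    intro z hz hconj
    have := hS _ hconj
    rw [conj_im] at this
    linarith [hS z hz]
  rw [Finset.card_union_of_disjoint hdisj,
    Finset.card_image_of_injective _ (starRingEnd ℂ).injective, two_mul]

theorem exists_harmonic_polynomial_le_card_zeros (hm : m ≠ 0) (hmn : m < n) :
    ∃ (p q : ℂ[X]) (S : Finset ℂ), p.degree = n ∧ q.degree = m ∧
      (m - 1) ^ 2 * n ≤ m * (S.card + 2 * (m - 1)) ∧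
      ∀ z ∈ S, p.eval z + starRingEnd ℂ (q.eval z) = 0 := by
  obtain ⟨ε, hε, S, hcard, hS⟩ := exists_finset_upperHalfPlane_zeros hm (by omega : n ≠ 0)
  refine ⟨analyticPart m n ε, (1 - X) ^ m, S ∪ S.image (starRingEnd ℂ),
    degree_analyticPart hmn hε.ne', degree_one_sub_X_pow ℂ m, ?_, ?_⟩
  · rw [card_union_image_conj fun z hz ↦ (hS z hz).1, hcard]
    linarith [le_card_zeroIndices hm n]
  · simp only [Finset.forall_mem_union, Finset.forall_mem_image]
    exact ⟨fun z hz ↦ eval_analyticPart_add_conj_eq_zero (hS z hz).2.1 (hS z hz).2.2,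
      fun z hz ↦ eval_analyticPart_add_conj_eq_zero_of_conj (hS z hz).2.1 (hS z hz).2.2⟩

end HarmonicPolynomial

lemma wilmshurst_bound_lt {m n c : ℕ} (hm : 4 < m) (hn : m ^ 3 + m ^ 2 ≤ n)
    (hc : (m - 1) ^ 2 * n ≤ m * (c + 2 * (m - 1))) :
    3 * (n : ℤ) - 2 + m * (m - 1) < c := by
  have hm₁ : 1 ≤ m := by omega
  zify [hm₁] at hm hn hc
  have hexcess : 1 ≤ (m : ℤ) ^ 2 - 5 * m + 1 := by nlinarith
  refine lt_of_mul_lt_mul_left ?_ (by positivity : (0 : ℤ) ≤ m)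
  calc (m : ℤ) * (3 * n - 2 + m * (m - 1))
      < 3 * m * n + (m ^ 3 + m ^ 2) - 2 * m * (m - 1) := by nlinarith
    _ ≤ 3 * m * n + 1 * n - 2 * m * (m - 1) := by linarith
    _ ≤ 3 * m * n + (m ^ 2 - 5 * m + 1) * n - 2 * m * (m - 1) := by gcongr
    _ = (m - 1) ^ 2 * n - 2 * m * (m - 1) := by ring
    _ ≤ m * c := by linarith

theorem wilmshurst_counterexamples_general {m n : ℕ} (hm : 4 < m) (hn : m ^ 3 + m ^ 2 ≤ n) :
    ∃ (p q : ℂ[X]) (S : Finset ℂ),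
      p.degree = n ∧ q.degree = m ∧
      3 * (n : ℤ) - 2 + m * (m - 1) < (S.card : ℤ) ∧
      ∀ z ∈ S, p.eval z + starRingEnd ℂ (q.eval z) = 0 := by
  have hmn : m < n := by nlinarith
  obtain ⟨p, q, S, hp, hq, hcard, hzero⟩ :=
    exists_harmonic_polynomial_le_card_zeros (by omega : m ≠ 0) hmn
  exact ⟨p, q, S, hp, hq, wilmshurst_bound_lt hm hn hcard, hzero⟩

/-- For every integer `m > 9` there exists `N₀` such that for all integers `n ≥ N₀` with
`n > m` there exist complex polynomials `p` of degree `n` and `q` of degree `m` and a finite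
set `S` of complex numbers with cardinality strictly greater than `3n − 2 + m(m−1)` such that
every `z ∈ S` satisfies `p(z) + conj(q(z)) = 0` (counterexamples to Wilmshurst's conjecture). -/
theorem wilmshurst_counterexamples (m : ℕ) (hm : 9 < m) :
    ∃ N₀ : ℕ, ∀ n : ℕ, N₀ ≤ n → m < n →
      ∃ (p q : Polynomial ℂ) (S : Finset ℂ),
        p.degree = n ∧ q.degree = m ∧
        3 * (n : ℤ) - 2 + m * (m - 1) < (S.card : ℤ) ∧
        ∀ z ∈ S, p.eval z + (starRingEnd ℂ) (q.eval z) = 0 :=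
  ⟨m ^ 3 + m ^ 2, fun _ hn _ ↦ wilmshurst_counterexamples_general (by omega) hn⟩
end

section
/- (Edelman–Kostlan) Let m ≥ 1 and let μ_m be the product measure on ℝ^{m+1} (coefficient vectors α = (α_0,…,α_m)) whose k-th factor is the real Gaussian measure with mean 0 and variance binom(m,k). For real numbers a < b, the expected number of zeros in the open interval (a,b) of the random polynomial f_α(x) = Σ_{k=0}^m α_k x^k satisfies ∫ (the cardinality of {x ∈ (a,b) : f_α(x) = 0}) dμ_m(α) = (√m/π)·(arctan(b) − arctan(a)). -/
open MeasureTheory ProbabilityTheory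

/-!
Off the null set of critical values, which Sard's theorem provides, the number of solutions of
`g_e(x) = y`, integrated over `y` and over the parameter `e`, is the integral of `|g_e'(x)|` by the
change of variables formula on countably many pieces on which `(e, x) ↦ (g_e(x), e)` is injective;
their images are Borel by the Lusin–Souslin theorem. For `f = α₀ + ∑_{k ≥ 1} α_k φ_k` one takes
`y = α₀` and `g_e = -∑_{k ≥ 1} e_k φ_k`.

At a fixed `x` this leaves a Gaussian expectation in the pair `(U, V) = (g_e(x), g_e'(x))`.
Subtracting from `V` its regression on `U` leaves an independent Gaussian, so the expectation
depends on the covariance kernel of `f` alone. For Kostlan polynomials this kernel is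
`(1 + x y) ^ m`, which gives the density `√m / (π (1 + x²))`, a multiple of `arctan'`.
-/

section Indicatrix

variable {X Y : Type*} [MeasurableSpace X] {Φ : X → Y}

lemma count_fiber_of_injOn [MeasurableSingletonClass X] {T : Set X} (hinj : T.InjOn Φ)
    (y : Y) :
    Measure.count (T ∩ Φ ⁻¹' {y}) = (Φ '' T).indicator 1 y := by
  by_cases hy : y ∈ Φ '' T
  · obtain ⟨w, hw, rfl⟩ := hy
    have hfiber : T ∩ Φ ⁻¹' {Φ w} = {w} := by
      ext z
      simp only [Set.mem_inter_iff, Set.mem_preimage, Set.mem_singleton_iff]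
      exact ⟨fun h => hinj h.1 hw h.2, by rintro rfl; exact ⟨hw, rfl⟩⟩
    rw [hfiber, Measure.count_singleton, Set.indicator_of_mem (Set.mem_image_of_mem Φ hw),
      Pi.one_apply]
  · have hfiber : T ∩ Φ ⁻¹' {y} = ∅ :=
      Set.eq_empty_iff_forall_notMem.2 fun z hz => hy ⟨z, hz⟩
    simp [hfiber, hy]

lemma count_fiber_iUnion_of_injOn [MeasurableSingletonClass X] {T : ℕ → Set X}
    (hdisj : Pairwise (Function.onFun Disjoint T)) (hinj : ∀ n, (T n).InjOn Φ) (y : Y) :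
    Measure.count ((⋃ n, T n) ∩ Φ ⁻¹' {y}) = ∑' n, (Φ '' T n).indicator 1 y := by
  have hmeas (n : ℕ) : MeasurableSet (T n ∩ Φ ⁻¹' {y}) :=
    Set.Subsingleton.measurableSet fun z hz w hw => hinj n hz.1 hw.1 (hz.2.trans hw.2.symm)
  rw [Set.iUnion_inter, measure_iUnion
    (fun i j hij => (hdisj hij).mono Set.inter_subset_left Set.inter_subset_left) hmeas]
  exact tsum_congr fun n => count_fiber_of_injOn (hinj n) y

lemma exists_disjoint_iUnion_eq_injOn [TopologicalSpace X] [SecondCountableTopology X]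
    [OpensMeasurableSpace X] {S : Set X} (hS : MeasurableSet S)
    (hΦ : ∀ w ∈ S, ∃ U ∈ nhds w, U.InjOn Φ) :
    ∃ T : ℕ → Set X, (∀ n, MeasurableSet (T n)) ∧ Pairwise (Function.onFun Disjoint T) ∧
      (∀ n, (T n).InjOn Φ) ∧ ⋃ n, T n = S := by
  choose! U hU hUinj using hΦ
  obtain ⟨t, htS, htc, hcover⟩ := TopologicalSpace.countable_cover_nhdsWithin
    fun w hw => mem_nhdsWithin_of_mem_nhds (interior_mem_nhds.2 (hU w hw))
  rcases t.eq_empty_or_nonempty with rfl | hne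
  · have hempty : S = ∅ := by simpa using hcover
    exact ⟨fun _ => ∅, by simp, fun _ _ _ => by simp [Function.onFun], by simp, by simp [hempty]⟩
  obtain ⟨r, rfl⟩ := htc.exists_eq_range hne
  set V : ℕ → Set X := fun n => S ∩ interior (U (r n))
  refine ⟨disjointed V,
    fun n => .disjointed (fun n => hS.inter isOpen_interior.measurableSet) n,
    disjoint_disjointed V, fun n => ?_, ?_⟩
  · exact (hUinj _ (htS ⟨n, rfl⟩)).mono
      ((disjointed_subset V n).trans (Set.inter_subset_right.trans interior_subset))
  · rw [iUnion_disjointed, ← Set.inter_iUnion]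
    exact Set.inter_eq_left.2 (hcover.trans_eq Set.biUnion_range)

variable [TopologicalSpace X] [PolishSpace X] [BorelSpace X] [TopologicalSpace Y] [T2Space Y]
  [MeasurableSpace Y] [OpensMeasurableSpace Y]

theorem measurable_count_fiber (hcont : Continuous Φ) {S : Set X}
    (hS : MeasurableSet S) (hloc : ∀ w ∈ S, ∃ U ∈ nhds w, U.InjOn Φ) :
    Measurable fun y => Measure.count (S ∩ Φ ⁻¹' {y}) := by
  obtain ⟨T, hT, hdisj, hinj, rfl⟩ := exists_disjoint_iUnion_eq_injOn hS hloc
  simp_rw [count_fiber_iUnion_of_injOn hdisj hinj]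
  -- The images of the injectivity pieces are Borel by the Lusin–Souslin theorem.
  exact .tsum fun n =>
    measurable_one.indicator ((hT n).image_of_continuousOn_injOn hcont.continuousOn (hinj n))

theorem lintegral_count_fiber (hcont : Continuous Φ) {S : Set X}
    (hS : MeasurableSet S) (hloc : ∀ w ∈ S, ∃ U ∈ nhds w, U.InjOn Φ)
    {μ : Measure Y} {κ : Measure X}
    (hκ : ∀ T, MeasurableSet T → T.InjOn Φ → μ (Φ '' T) = κ T) :
    ∫⁻ y, Measure.count (S ∩ Φ ⁻¹' {y}) ∂μ = κ S := by
  obtain ⟨T, hT, hdisj, hinj, rfl⟩ := exists_disjoint_iUnion_eq_injOn hS hloc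
  have himage (n : ℕ) : MeasurableSet (Φ '' T n) :=
    (hT n).image_of_continuousOn_injOn hcont.continuousOn (hinj n)
  calc ∫⁻ y, Measure.count ((⋃ n, T n) ∩ Φ ⁻¹' {y}) ∂μ
      = ∫⁻ y, ∑' n, (Φ '' T n).indicator 1 y ∂μ :=
        lintegral_congr fun y => count_fiber_iUnion_of_injOn hdisj hinj y
    _ = ∑' n, μ (Φ '' T n) := by
        rw [lintegral_tsum fun n => (measurable_one.indicator (himage n)).aemeasurable]
        exact tsum_congr fun n => lintegral_indicator_one (himage n)
    _ = κ (⋃ n, T n) := by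
        rw [measure_iUnion hdisj hT]
        exact tsum_congr fun n => hκ (T n) (hT n) (hinj n)

end Indicatrix

section AreaFormula

variable {E : Type*}

/-- The map whose fibre over `(y, e)` is the set of all `(e, x)` with `g (e, x) = y`. It turns the
level sets of a family of functions `g (e, ·)`, indexed by `e`, into fibres of a single map. -/
def fiberMap (g : E × ℝ → ℝ) (w : E × ℝ) : ℝ × E := (g w, w.1)

lemma count_fiber_fiberMap [MeasurableSpace E] [MeasurableSingletonClass E] (g : E × ℝ → ℝ)
    (S : Set ℝ) (p : ℝ × E) :
    Measure.count (Set.univ ×ˢ S ∩ fiberMap g ⁻¹' {p}) =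
      Measure.count {x | x ∈ S ∧ g (p.2, x) = p.1} := by
  have hfiber : Set.univ ×ˢ S ∩ fiberMap g ⁻¹' {p} =
      Prod.mk p.2 '' {x | x ∈ S ∧ g (p.2, x) = p.1} := by
    ext ⟨e, x⟩
    constructor
    · rintro ⟨⟨-, hx⟩, hp⟩
      obtain rfl : (g (e, x), e) = p := hp
      exact ⟨x, ⟨hx, rfl⟩, rfl⟩
    · rintro ⟨x, ⟨hx, hg⟩, h⟩
      obtain ⟨rfl, rfl⟩ := Prod.mk.inj h
      exact ⟨⟨trivial, hx⟩, Prod.ext hg rfl⟩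
  rw [hfiber, Measure.count_injective_image (Prod.mk_right_injective p.2)]

lemma isClosed_image_fiberMap_of_isCompact [TopologicalSpace E] [T2Space E]
    {g : E × ℝ → ℝ} (hg : Continuous g) {C : Set (E × ℝ)} (hC : IsClosed C)
    {K : Set ℝ} (hK : IsCompact K) :
    IsClosed (fiberMap g '' (C ∩ Set.univ ×ˢ K)) := by
  have : CompactSpace K := isCompact_iff_compactSpace.1 hK
  have hclosed : IsClosed {q : (ℝ × E) × K | (q.1.2, (q.2 : ℝ)) ∈ C ∧ g (q.1.2, q.2) = q.1.1} :=
    (hC.preimage (by fun_prop)).inter (isClosed_eq (by fun_prop) (by fun_prop))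
  convert isClosedMap_fst_of_compactSpace _ hclosed using 1
  ext p
  constructor
  · rintro ⟨⟨e, x⟩, ⟨hC, -, hx⟩, rfl⟩
    exact ⟨((g (e, x), e), ⟨x, hx⟩), ⟨hC, rfl⟩, rfl⟩
  · rintro ⟨⟨⟨y, e⟩, x⟩, ⟨hC, hg⟩, rfl⟩
    exact ⟨(e, x), ⟨hC, trivial, x.2⟩, Prod.ext hg rfl⟩

lemma measurableSet_image_fiberMap_of_isClosed [TopologicalSpace E] [T2Space E]
    [MeasurableSpace (ℝ × E)] [OpensMeasurableSpace (ℝ × E)]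
    {g : E × ℝ → ℝ} (hg : Continuous g) {C : Set (E × ℝ)} (hC : IsClosed C) :
    MeasurableSet (fiberMap g '' C) := by
  have hcover : C = ⋃ n, C ∩ Set.univ ×ˢ compactCovering ℝ n := by
    rw [← Set.inter_iUnion, ← Set.prod_iUnion, iUnion_compactCovering, Set.univ_prod_univ,
      Set.inter_univ]
  rw [hcover, Set.image_iUnion]
  exact .iUnion fun n =>
    (isClosed_image_fiberMap_of_isCompact hg hC (isCompact_compactCovering ℝ n)).measurableSet

lemma injOn_of_hasDerivAt_ne_zero {f f' : ℝ → ℝ} {s : Set ℝ} (hs : s.OrdConnected)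
    (hf : ∀ x ∈ s, HasDerivAt f (f' x) x) (hf' : ∀ x ∈ s, f' x ≠ 0) : s.InjOn f := by
  suffices h : ∀ x ∈ s, ∀ y ∈ s, x < y → f x ≠ f y by
    intro x hx y hy hxy
    by_contra hne
    rcases lt_or_gt_of_ne hne with hlt | hlt
    · exact h x hx y hy hlt hxy
    · exact h y hy x hx hlt hxy.symm
  intro x hx y hy hlt hxy
  have hsub := hs.out hx hy
  obtain ⟨c, hc, hfc⟩ := exists_hasDerivAt_eq_zero hlt
    (fun z hz => (hf z (hsub hz)).continuousAt.continuousWithinAt) hxy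
    (fun z hz => hf z (hsub (Set.Ioo_subset_Icc_self hz)))
  exact hf' c (hsub (Set.Ioo_subset_Icc_self hc)) hfc

variable {g dg : E × ℝ → ℝ} (hderiv : ∀ e x, HasDerivAt (fun x => g (e, x)) (dg (e, x)) x)
include hderiv

lemma exists_mem_nhds_injOn_fiberMap [TopologicalSpace E] (hdg : Continuous dg) {w : E × ℝ}
    (hw : dg w ≠ 0) : ∃ U ∈ nhds w, U.InjOn (fiberMap g) := by
  obtain ⟨A, hA, B, hB, hAB⟩ := mem_nhds_prod_iff.1 (hdg.continuousAt.eventually_ne hw)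
  obtain ⟨ε, hε, hball⟩ := Metric.mem_nhds_iff.1 hB
  refine ⟨A ×ˢ Metric.ball w.2 ε, prod_mem_nhds hA (Metric.ball_mem_nhds _ hε), ?_⟩
  rintro ⟨e, x⟩ ⟨he, hx⟩ ⟨_, y⟩ ⟨-, hy⟩ h
  obtain ⟨hg, rfl⟩ := Prod.mk.inj h
  exact Prod.ext rfl <| injOn_of_hasDerivAt_ne_zero (convex_ball w.2 ε).ordConnected
    (fun z _ => hderiv e z) (fun z hz => hAB (Set.mk_mem_prod he (hball hz))) hx hy hg

variable [MeasurableSpace E] (P : Measure E) [SFinite P]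

lemma measure_image_fiberMap_eq_zero [TopologicalSpace E] [BorelSpace E]
    [SecondCountableTopology E] [T2Space E] (hg : Continuous g) (hdg : Continuous dg)
    {ν : Measure ℝ} [SFinite ν] (hν : ν ≪ volume) :
    (ν.prod P) (fiberMap g '' {w | dg w = 0}) = 0 := by
  have hmeas : MeasurableSet (fiberMap g '' {w | dg w = 0}) :=
    measurableSet_image_fiberMap_of_isClosed hg (isClosed_eq hdg continuous_const)
  rw [Measure.prod_apply_symm hmeas, lintegral_eq_zero_of_ae_eq_zero]
  refine ae_of_all _ fun e => hν (measure_mono_null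
    (t := (fun x => g (e, x)) '' {x | dg (e, x) = 0}) ?_ ?_)
  · rintro y ⟨⟨_, x⟩, hx, h⟩
    obtain ⟨hy, rfl⟩ := Prod.mk.inj h
    exact ⟨x, hx, hy⟩
  · refine addHaar_image_eq_zero_of_det_fderivWithin_eq_zero volume
      (fun x _ => (hderiv e x).hasFDerivAt.hasFDerivWithinAt) fun x (hx : dg (e, x) = 0) => ?_
    simp [hx]

lemma measure_image_fiberMap_of_injOn (hg : Measurable g) (hdg : Measurable dg)
    {ρ : ℝ → ENNReal} (hρ : Measurable ρ) {T : Set (E × ℝ)} (hT : MeasurableSet T)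
    (hinj : T.InjOn (fiberMap g)) (himage : MeasurableSet (fiberMap g '' T)) :
    ((volume.withDensity ρ).prod P) (fiberMap g '' T) =
      (P.prod volume).withDensity (fun w => ENNReal.ofReal |dg w| * ρ (g w)) T := by
  have hslice (e : E) : MeasurableSet {x | (e, x) ∈ T} := hT.preimage measurable_prodMk_left
  have himage_slice (e : E) : (fun y => (y, e)) ⁻¹' (fiberMap g '' T) =
      (fun x => g (e, x)) '' {x | (e, x) ∈ T} := by
    ext y
    constructor
    · rintro ⟨⟨_, x⟩, hx, h⟩
      obtain ⟨hy, rfl⟩ := Prod.mk.inj h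
      exact ⟨x, hx, hy⟩
    · rintro ⟨x, hx, rfl⟩
      exact ⟨(e, x), hx, rfl⟩
  have hslice_inj (e : E) : Set.InjOn (fun x => g (e, x)) {x | (e, x) ∈ T} :=
    fun x hx y hy hxy => congrArg Prod.snd (hinj hx hy (Prod.ext hxy rfl))
  rw [Measure.prod_apply_symm himage, withDensity_apply _ hT, ← lintegral_indicator hT,
    lintegral_prod _ (by fun_prop (disch := assumption))]
  refine lintegral_congr fun e => ?_
  rw [himage_slice, withDensity_apply', lintegral_image_eq_lintegral_abs_deriv_mul (hslice e)
    (fun x _ => (hderiv e x).hasDerivWithinAt) (hslice_inj e), ← lintegral_indicator (hslice e)]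
  rfl

-- By Sard's theorem almost every fibre consists of regular points only.
lemma count_levelSet_ae_eq_count_regular [TopologicalSpace E] [BorelSpace E]
    [SecondCountableTopology E] [T2Space E] (hg : Continuous g) (hdg : Continuous dg)
    {ν : Measure ℝ} [SFinite ν] (hν : ν ≪ volume) (S : Set ℝ) :
    (fun p => Measure.count {x | x ∈ S ∧ g (p.2, x) = p.1}) =ᵐ[ν.prod P]
      fun p => Measure.count ((Set.univ ×ˢ S ∩ {w | dg w ≠ 0}) ∩ fiberMap g ⁻¹' {p}) := by
  have hnull := measure_image_fiberMap_eq_zero hderiv P hg hdg hν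
  filter_upwards [measure_eq_zero_iff_ae_notMem.1 hnull] with p hp
  rw [← count_fiber_fiberMap]
  congr 1
  ext w
  exact ⟨fun hw => ⟨⟨hw.1, fun h => hp ⟨w, h, hw.2⟩⟩, hw.2⟩, fun hw => ⟨hw.1.1, hw.2⟩⟩

variable [TopologicalSpace E] [PolishSpace E] [BorelSpace E]

theorem aemeasurable_count_levelSet (hg : Continuous g) (hdg : Continuous dg) {ν : Measure ℝ}
    [SFinite ν] (hν : ν ≪ volume) {S : Set ℝ} (hS : MeasurableSet S) :
    AEMeasurable (fun p : ℝ × E => Measure.count {x | x ∈ S ∧ g (p.2, x) = p.1}) (ν.prod P) := by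
  have hregular : MeasurableSet ((Set.univ : Set E) ×ˢ S ∩ {w | dg w ≠ 0}) :=
    (MeasurableSet.univ.prod hS).inter (isOpen_ne_fun hdg continuous_const).measurableSet
  exact (measurable_count_fiber (hg.prodMk continuous_fst) hregular fun w hw =>
    exists_mem_nhds_injOn_fiberMap hderiv hdg hw.2).aemeasurable.congr
      (count_levelSet_ae_eq_count_regular hderiv P hg hdg hν S).symm

theorem lintegral_count_levelSet (hg : Continuous g) (hdg : Continuous dg) {ρ : ℝ → ENNReal}
    (hρ : Measurable ρ) {S : Set ℝ} (hS : MeasurableSet S) :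
    ∫⁻ p : ℝ × E, Measure.count {x | x ∈ S ∧ g (p.2, x) = p.1}
        ∂((volume.withDensity ρ).prod P) =
      ∫⁻ x in S, ∫⁻ e, ENNReal.ofReal |dg (e, x)| * ρ (g (e, x)) ∂P := by
  have := hg.measurable
  have := hdg.measurable
  set κ := (P.prod volume).withDensity fun w => ENNReal.ofReal |dg w| * ρ (g w) with hκ
  set R : Set (E × ℝ) := Set.univ ×ˢ S ∩ {w | dg w ≠ 0} with hR
  have hcont : Continuous (fiberMap g) := hg.prodMk continuous_fst
  have hSm : MeasurableSet ((Set.univ : Set E) ×ˢ S) := .prod .univ hS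
  have hRm : MeasurableSet R := hSm.inter (isOpen_ne_fun hdg continuous_const).measurableSet
  calc ∫⁻ p : ℝ × E, Measure.count {x | x ∈ S ∧ g (p.2, x) = p.1} ∂((volume.withDensity ρ).prod P)
      = ∫⁻ p, Measure.count (R ∩ fiberMap g ⁻¹' {p}) ∂((volume.withDensity ρ).prod P) :=
        lintegral_congr_ae (count_levelSet_ae_eq_count_regular hderiv P hg hdg
          (withDensity_absolutelyContinuous volume ρ) S)
    _ = κ R :=
        lintegral_count_fiber hcont hRm
          (fun w hw => exists_mem_nhds_injOn_fiberMap hderiv hdg hw.2) fun T hT hinj =>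
            measure_image_fiberMap_of_injOn hderiv P hg.measurable hdg.measurable hρ hT hinj
              (hT.image_of_continuousOn_injOn hcont.continuousOn hinj)
    _ = κ (Set.univ ×ˢ S) := by
        rw [hκ, withDensity_apply _ hRm, withDensity_apply _ hSm, hR, Set.inter_comm,
          ← Measure.restrict_restrict₀' hSm.nullMeasurableSet]
        exact setLIntegral_eq_of_support_subset fun w hw h0 => hw (by simp [h0])
    _ = ∫⁻ x in S, ∫⁻ e, ENNReal.ofReal |dg (e, x)| * ρ (g (e, x)) ∂P := by
        rw [hκ, withDensity_apply _ hSm, ← Measure.prod_restrict, Measure.restrict_univ,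
          lintegral_prod_symm _ (by fun_prop)]

end AreaFormula

section GaussianRegression

open scoped NNReal

lemma lintegral_abs_gaussianReal (v : ℝ≥0) :
    ∫⁻ x, ENNReal.ofReal |x| ∂(gaussianReal 0 v) = ENNReal.ofReal √(2 * v / Real.pi) := by
  rcases eq_or_ne v 0 with rfl | hv
  · simp
  have : (0 : ℝ) < v := by positivity
  have := Real.pi_pos
  have hintegrable : Integrable (fun x : ℝ => |x|) (gaussianReal 0 v) :=
    ((memLp_id_gaussianReal (μ := 0) (v := v) 1).integrable (by simp)).abs
  have hpdf (x : ℝ) : gaussianPDFReal 0 v x • |x| = (√(2 * Real.pi * v))⁻¹ *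
      (|x| ^ (1 : ℝ) * Real.exp (-(2 * v : ℝ)⁻¹ * |x| ^ (2 : ℝ))) := by
    simp only [gaussianPDFReal, smul_eq_mul, sub_zero, Real.rpow_one, Real.rpow_two, sq_abs]
    rw [mul_assoc, mul_comm |x|]
    congr 3
    ring
  have hmoment : ∫ x : ℝ, |x| ^ (1 : ℝ) * Real.exp (-(2 * v : ℝ)⁻¹ * |x| ^ (2 : ℝ)) = 2 * v := by
    rw [integral_comp_abs (f := fun x : ℝ => x ^ (1 : ℝ) * Real.exp (-(2 * v : ℝ)⁻¹ * x ^ (2 : ℝ))),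
      integral_rpow_mul_exp_neg_mul_rpow (by norm_num) (by norm_num) (by positivity)]
    norm_num [Real.rpow_neg_one]
    ring
  rw [← ofReal_integral_eq_lintegral_ofReal hintegrable (ae_of_all _ fun x => abs_nonneg x),
    integral_gaussianReal_eq_integral_smul hv]
  simp_rw [hpdf]
  rw [integral_const_mul, hmoment, eq_comm (a := ENNReal.ofReal _), inv_mul_eq_div]
  congr 1
  rw [Real.sqrt_eq_iff_mul_self_eq (by positivity) (by positivity), div_mul_div_comm,
    Real.mul_self_sqrt (by positivity)]
  field_simp

lemma gaussianReal_withDensity_gaussianPDF (A : ℝ≥0) {v : ℝ≥0} (hv : v ≠ 0) :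
    (gaussianReal 0 A).withDensity (gaussianPDF 0 v) =
      gaussianPDF 0 (A + v) 0 • gaussianReal 0 (A * v / (A + v)) := by
  rcases eq_or_ne A 0 with rfl | hA
  · simp [gaussianReal_zero_var, dirac_withDensity (gaussianPDF 0 v)]
  have : (0 : ℝ) < A := by positivity
  have : (0 : ℝ) < v := by positivity
  have hpdf : gaussianPDF 0 A * gaussianPDF 0 v =
      gaussianPDF 0 (A + v) 0 • gaussianPDF 0 (A * v / (A + v)) := by
    ext x
    have hexp : Real.exp (-x ^ 2 / (2 * A)) * Real.exp (-x ^ 2 / (2 * v)) =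
        Real.exp (-x ^ 2 / (2 * (A * v / (A + v)))) := by
      rw [← Real.exp_add]
      congr 1
      field_simp
      ring
    have hsqrt : √(2 * Real.pi * A) * √(2 * Real.pi * v) =
        √(2 * Real.pi * (A + v)) * √(2 * Real.pi * (A * v / (A + v))) := by
      rw [← Real.sqrt_mul (by positivity), ← Real.sqrt_mul (by positivity)]
      congr 1
      field_simp
    simp only [gaussianPDF, Pi.mul_apply, Pi.smul_apply, smul_eq_mul, gaussianPDFReal, sub_zero,
      NNReal.coe_add, NNReal.coe_div, NNReal.coe_mul, zero_pow two_ne_zero, neg_zero, zero_div,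
      Real.exp_zero, mul_one]
    rw [← ENNReal.ofReal_mul (by positivity), ← ENNReal.ofReal_mul (by positivity),
      mul_mul_mul_comm, hexp, ← mul_inv, hsqrt, mul_inv, mul_assoc]
  rw [gaussianReal_of_var_ne_zero 0 hA, ← withDensity_mul _ (by fun_prop) (by fun_prop), hpdf,
    withDensity_smul _ (by fun_prop), gaussianReal_of_var_ne_zero 0 (by positivity)]

lemma gaussianReal_prod_map_const_mul_add (A D : ℝ≥0) (β : ℝ) :
    ((gaussianReal 0 A).prod (gaussianReal 0 D)).map (fun p => β * p.1 + p.2) =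
      gaussianReal 0 (NNReal.mk (β ^ 2) (sq_nonneg β) * A + D) := by
  have hcomp : (fun p : ℝ × ℝ => β * p.1 + p.2) =
      (fun p => p.1 + p.2) ∘ Prod.map (β * ·) id := rfl
  rw [hcomp, ← Measure.map_map (by fun_prop) (by fun_prop),
    ← Measure.map_prod_map _ _ (by fun_prop) measurable_id, Measure.map_id,
    gaussianReal_map_const_mul, ← Measure.conv, gaussianReal_conv_gaussianReal, mul_zero, add_zero]

lemma lintegral_abs_mul_gaussianPDF_prod (A D : ℝ≥0) {v : ℝ≥0} (hv : v ≠ 0) (β : ℝ) :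
    ∫⁻ p, ENNReal.ofReal |β * p.1 + p.2| * gaussianPDF 0 v p.1
        ∂((gaussianReal 0 A).prod (gaussianReal 0 D)) =
      gaussianPDF 0 (A + v) 0 *
        ENNReal.ofReal √(2 * (β ^ 2 * (A * v / (A + v)) + D) / Real.pi) := by
  have hmeas : Measurable fun p : ℝ × ℝ => gaussianPDF 0 v p.1 := by fun_prop
  have hlaw : ((gaussianReal 0 A).prod (gaussianReal 0 D)).withDensity
      (fun p => gaussianPDF 0 v p.1) =
        gaussianPDF 0 (A + v) 0 • (gaussianReal 0 (A * v / (A + v))).prod (gaussianReal 0 D) := by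
    rw [← prod_withDensity_left (by fun_prop), gaussianReal_withDensity_gaussianPDF A hv,
      Measure.prod_smul_left]
  have hcomm : (fun p : ℝ × ℝ => ENNReal.ofReal |β * p.1 + p.2| * gaussianPDF 0 v p.1) =
      (fun p => gaussianPDF 0 v p.1) * fun p => ENNReal.ofReal |β * p.1 + p.2| := by
    ext p; exact mul_comm _ _
  rw [hcomm, ← lintegral_withDensity_eq_lintegral_mul _ hmeas (by fun_prop), hlaw,
    lintegral_smul_measure, smul_eq_mul, ← lintegral_map (f := fun t => ENNReal.ofReal |t|)
    (by fun_prop) (by fun_prop), gaussianReal_prod_map_const_mul_add, lintegral_abs_gaussianReal]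
  simp

/-- The density of the zeros of a smooth centered Gaussian function `f` at a point `x`, in terms of
`K = Var f(x)`, `B = Cov (f(x), f'(x))` and `C = Var f'(x)`. -/
noncomputable def kacRiceDensity (K B C : ℝ) : ℝ := √(K * C - B ^ 2) / (Real.pi * K)

variable {Ω : Type*} [MeasurableSpace Ω] {P : Measure Ω} {U V : Ω → ℝ}

lemma covariance_eq_zero_of_variance_eq_zero [IsProbabilityMeasure P] (hU : MemLp U 2 P)
    (hvar : Var[U; P] = 0) : cov[U, V; P] = 0 := by
  rw [covariance, integral_eq_zero_of_ae]
  filter_upwards [ae_eq_integral_of_variance_eq_zero hU hvar] with ω hω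
  simp [hω]

lemma exists_regressionCoeff [IsProbabilityMeasure P] (hU : MemLp U 2 P) :
    ∃ β, β * Var[U; P] = cov[U, V; P] :=
  ⟨cov[U, V; P] / Var[U; P], div_mul_cancel_of_imp (covariance_eq_zero_of_variance_eq_zero hU)⟩

lemma variance_regressionResidual [IsProbabilityMeasure P] (hU : MemLp U 2 P) (hV : MemLp V 2 P)
    {β : ℝ} (hβ : β * Var[U; P] = cov[U, V; P]) :
    Var[fun ω => V ω - β * U ω; P] = Var[V; P] - β * cov[U, V; P] := by
  rw [variance_fun_sub hV (hU.const_mul β), variance_const_mul, covariance_const_mul_right,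
    covariance_comm V U, ← hβ]
  ring

lemma map_prodMk_regressionResidual (hUV : HasGaussianLaw (fun ω => (U ω, V ω)) P)
    (hU : P[U] = 0) (hV : P[V] = 0) {β : ℝ} (hβ : β * Var[U; P] = cov[U, V; P]) :
    P.map (fun ω => (U ω, V ω - β * U ω)) = (gaussianReal 0 Var[U; P].toNNReal).prod
      (gaussianReal 0 Var[fun ω => V ω - β * U ω; P].toNNReal) := by
  have := hUV.isProbabilityMeasure
  set W : Ω → ℝ := fun ω => V ω - β * U ω with hW
  have hUW : HasGaussianLaw (fun ω => (U ω, W ω)) P :=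
    hUV.map_fun ((ContinuousLinearMap.fst ℝ ℝ ℝ).prod
      (ContinuousLinearMap.snd ℝ ℝ ℝ - β • ContinuousLinearMap.fst ℝ ℝ ℝ))
  have hindep : IndepFun U W P := by
    refine hUW.indepFun_of_covariance_eq_zero ?_
    rw [hW, covariance_fun_sub_right hUV.fst.memLp_two hUV.snd.memLp_two
      (hUV.fst.memLp_two.const_mul β), covariance_const_mul_right,
      covariance_self hUV.fst.aemeasurable, hβ, sub_self]
  have hmean : P[W] = 0 := by
    rw [hW, integral_sub hUV.snd.integrable (hUV.fst.integrable.const_mul β), integral_const_mul,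
      hU, hV, mul_zero, sub_zero]
  rw [(indepFun_iff_map_prod_eq_prod_map_map hUV.fst.aemeasurable hUW.snd.aemeasurable).1 hindep,
    hUV.fst.map_eq_gaussianReal, hUW.snd.map_eq_gaussianReal, hU, hmean]

theorem lintegral_abs_mul_gaussianPDF (hUV : HasGaussianLaw (fun ω => (U ω, V ω)) P)
    (hU : P[U] = 0) (hV : P[V] = 0) {v : ℝ≥0} (hv : v ≠ 0) :
    ∫⁻ ω, ENNReal.ofReal |V ω| * gaussianPDF 0 v (U ω) ∂P =
      ENNReal.ofReal (kacRiceDensity (Var[U; P] + v) cov[U, V; P] Var[V; P]) := by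
  have := hUV.isProbabilityMeasure
  have := variance_nonneg U P
  have hUm := hUV.fst.aemeasurable
  have hVm := hUV.snd.aemeasurable
  obtain ⟨β, hβ⟩ := exists_regressionCoeff (V := V) hUV.fst.memLp_two
  have hregress : ∫⁻ ω, ENNReal.ofReal |V ω| * gaussianPDF 0 v (U ω) ∂P =
      ∫⁻ p, ENNReal.ofReal |β * p.1 + p.2| * gaussianPDF 0 v p.1
        ∂(P.map fun ω => (U ω, V ω - β * U ω)) := by
    rw [lintegral_map' (Measurable.aemeasurable (by fun_prop)) (by fun_prop)]
    simp only [add_sub_cancel]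
  rw [hregress, map_prodMk_regressionResidual hUV hU hV hβ,
    lintegral_abs_mul_gaussianPDF_prod _ _ hv, gaussianPDF,
    ← ENNReal.ofReal_mul (gaussianPDFReal_nonneg _ _ _), kacRiceDensity,
    ← Real.sqrt_sq (x := Real.pi * (Var[U; P] + v)) (by positivity),
    ← Real.sqrt_div' _ (by positivity)]
  simp only [gaussianPDFReal, sub_zero, zero_pow two_ne_zero, neg_zero, zero_div, Real.exp_zero,
    mul_one, NNReal.coe_add, Real.coe_toNNReal _ (variance_nonneg _ P)]
  rw [← Real.sqrt_inv, ← Real.sqrt_mul (by positivity),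
    variance_regressionResidual hUV.fst.memLp_two hUV.snd.memLp_two hβ, ← hβ]
  congr 2
  field_simp
  ring

end GaussianRegression

section GaussianSum

open scoped NNReal

variable {Ω ι : Type*} [MeasurableSpace Ω] {P : Measure Ω} [Fintype ι] {ξ : ι → Ω → ℝ} {v : ι → ℝ≥0}

lemma integral_sum_mul_of_hasLaw_gaussianReal (hξ : ∀ k, HasLaw (ξ k) (gaussianReal 0 (v k)) P)
    (c : ι → ℝ) : ∫ ω, ∑ k, c k * ξ k ω ∂P = 0 := by
  rw [integral_finsetSum _ fun k _ => (hξ k).hasGaussianLaw.integrable.const_mul (c k)]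
  refine Finset.sum_eq_zero fun k _ => ?_
  rw [integral_const_mul, (hξ k).integral_eq, integral_id_gaussianReal, mul_zero]

lemma covariance_sum_mul_of_iIndepFun (hξ : ∀ k, HasLaw (ξ k) (gaussianReal 0 (v k)) P)
    (hindep : iIndepFun ξ P) (c d : ι → ℝ) :
    cov[fun ω => ∑ k, c k * ξ k ω, fun ω => ∑ k, d k * ξ k ω; P] = ∑ k, c k * d k * v k := by
  classical
  have := hindep.isProbabilityMeasure
  have hL2 (k : ι) : MemLp (ξ k) 2 P := (hξ k).hasGaussianLaw.memLp_two
  have hcov (i j : ι) : cov[ξ i, ξ j; P] = if i = j then (v i : ℝ) else 0 := by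
    split_ifs with hij
    · rw [← hij, covariance_self (hξ i).aemeasurable, (hξ i).variance_eq, variance_id_gaussianReal]
    · exact (hindep.indepFun hij).covariance_eq_zero (hL2 i) (hL2 j)
  rw [covariance_fun_sum_fun_sum (fun k => (hL2 k).const_mul (c k))
    fun k => (hL2 k).const_mul (d k)]
  simp only [covariance_const_mul_left, covariance_const_mul_right, hcov, mul_ite, mul_zero,
    Finset.sum_ite_eq, Finset.mem_univ, if_true]
  exact Finset.sum_congr rfl fun k _ => by ring

lemma variance_sum_mul_of_iIndepFun (hξ : ∀ k, HasLaw (ξ k) (gaussianReal 0 (v k)) P)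
    (hindep : iIndepFun ξ P) (c : ι → ℝ) :
    Var[fun ω => ∑ k, c k * ξ k ω; P] = ∑ k, c k ^ 2 * v k := by
  have hmeas (k : ι) : AEMeasurable (ξ k) P := (hξ k).aemeasurable
  rw [← covariance_self (by fun_prop), covariance_sum_mul_of_iIndepFun hξ hindep]
  simp only [sq]

lemma hasGaussianLaw_prodMk_sum_mul (hξ : ∀ k, HasLaw (ξ k) (gaussianReal 0 (v k)) P)
    (hindep : iIndepFun ξ P) (c d : ι → ℝ) :
    HasGaussianLaw (fun ω => (∑ k, c k * ξ k ω, ∑ k, d k * ξ k ω)) P := by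
  let L (c : ι → ℝ) : (ι → ℝ) →L[ℝ] ℝ := ∑ k, c k • ContinuousLinearMap.proj k
  have hjoint := hindep.hasGaussianLaw fun k => (hξ k).hasGaussianLaw
  simpa [L] using hjoint.map_fun ((L c).prod (L d))

lemma lintegral_abs_sum_mul_gaussianPDF (hξ : ∀ k, HasLaw (ξ k) (gaussianReal 0 (v k)) P)
    (hindep : iIndepFun ξ P) (c d : ι → ℝ) {w : ℝ≥0} (hw : w ≠ 0) :
    ∫⁻ ω, ENNReal.ofReal |∑ k, d k * ξ k ω| * gaussianPDF 0 w (∑ k, c k * ξ k ω) ∂P =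
      ENNReal.ofReal (kacRiceDensity (∑ k, c k ^ 2 * v k + w) (∑ k, c k * d k * v k)
        (∑ k, d k ^ 2 * v k)) := by
  rw [lintegral_abs_mul_gaussianPDF (hasGaussianLaw_prodMk_sum_mul hξ hindep c d)
    (integral_sum_mul_of_hasLaw_gaussianReal hξ c)
    (integral_sum_mul_of_hasLaw_gaussianReal hξ d) hw,
    variance_sum_mul_of_iIndepFun hξ hindep, variance_sum_mul_of_iIndepFun hξ hindep,
    covariance_sum_mul_of_iIndepFun hξ hindep]

end GaussianSum

section KacRice

open scoped NNReal

lemma ncard_eq_toReal_count {X : Type*} [MeasurableSpace X] {s : Set X} (hs : MeasurableSet s) :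
    (s.ncard : ℝ) = (Measure.count s).toReal := by
  rw [Measure.count_apply hs, Set.ncard]
  -- An infinite set has `ncard = 0`, matching `∞.toReal = 0`.
  cases s.encard <;> simp

variable {n : ℕ} {v : Fin (n + 1) → ℝ≥0} {φ φ' : Fin (n + 1) → ℝ → ℝ}

lemma sum_eq_zero_iff_sum_neg_succ_eq (hφ0 : ∀ x, φ 0 x = 1) (α : Fin (n + 1) → ℝ) (x : ℝ) :
    ∑ k, α k * φ k x = 0 ↔ ∑ k : Fin n, -φ k.succ x * α k.succ = α 0 := by
  simp only [Fin.sum_univ_succ, hφ0, neg_mul, Finset.sum_neg_distrib, mul_comm (α _)]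
  exact ⟨fun h => by linarith, fun h => by linarith⟩

lemma hasDerivAt_sum_neg_succ_mul (hφ : ∀ k x, HasDerivAt (φ k) (φ' k x) x) (e : Fin n → ℝ)
    (x : ℝ) : HasDerivAt (fun x => ∑ k : Fin n, -φ k.succ x * e k)
      (∑ k : Fin n, -φ' k.succ x * e k) x :=
  .fun_sum fun k _ => (hφ k.succ x).neg.mul_const (e k)

variable (hv : v 0 ≠ 0) (hφ0 : ∀ x, φ 0 x = 1) (hφ : ∀ k x, HasDerivAt (φ k) (φ' k x) x)
  (hφ' : ∀ k, Continuous (φ' k)) {S : Set ℝ} (hS : MeasurableSet S)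
include hv hφ0 hφ hφ' hS

lemma aemeasurable_count_zeros_sum :
    AEMeasurable (fun α : Fin (n + 1) → ℝ => Measure.count {x | x ∈ S ∧ ∑ k, α k * φ k x = 0})
      (Measure.pi fun k => gaussianReal 0 (v k)) := by
  have hφcont (k : Fin (n + 1)) : Continuous (φ k) :=
    continuous_iff_continuousAt.2 fun x => (hφ k x).continuousAt
  have hmeas := aemeasurable_count_levelSet (E := Fin n → ℝ)
    (g := fun w => ∑ k, -φ k.succ w.2 * w.1 k) (dg := fun w => ∑ k, -φ' k.succ w.2 * w.1 k)
    (hasDerivAt_sum_neg_succ_mul hφ) (Measure.pi fun k => gaussianReal 0 (v k.succ))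
    (by fun_prop) (by fun_prop) (gaussianReal_absolutelyContinuous 0 hv) hS
  have hsplit := measurePreserving_piFinSuccAbove (fun k => gaussianReal 0 (v k)) 0
  simp only [Fin.zero_succAbove] at hsplit
  simp_rw [sum_eq_zero_iff_sum_neg_succ_eq hφ0]
  exact (hsplit.aemeasurable_comp_iff (MeasurableEquiv.measurableEmbedding _)).2 hmeas

lemma lintegral_count_zeros_sum :
    ∫⁻ α, Measure.count {x | x ∈ S ∧ ∑ k, α k * φ k x = 0}
        ∂(Measure.pi fun k => gaussianReal 0 (v k)) =
      ∫⁻ x in S, ENNReal.ofReal (kacRiceDensity (∑ k, φ k x ^ 2 * v k)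
        (∑ k, φ k x * φ' k x * v k) (∑ k, φ' k x ^ 2 * v k)) := by
  set P : Measure (Fin n → ℝ) := Measure.pi fun k => gaussianReal 0 (v k.succ) with hP
  have hφ'0 (x : ℝ) : φ' 0 x = 0 := by
    have h := hφ 0 x
    rw [funext hφ0] at h
    exact h.unique (hasDerivAt_const x 1)
  have hφcont (k : Fin (n + 1)) : Continuous (φ k) :=
    continuous_iff_continuousAt.2 fun x => (hφ k x).continuousAt
  have hξ (k : Fin n) : HasLaw (fun e : Fin n → ℝ => e k) (gaussianReal 0 (v k.succ)) P :=
    (measurePreserving_eval (fun k : Fin n => gaussianReal 0 (v k.succ)) k).hasLaw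
  have hindep : iIndepFun (fun k (e : Fin n → ℝ) => e k) P :=
    iIndepFun_pi (X := fun _ => id) fun _ => aemeasurable_id
  have harea := lintegral_count_levelSet (E := Fin n → ℝ)
    (g := fun w => ∑ k, -φ k.succ w.2 * w.1 k) (dg := fun w => ∑ k, -φ' k.succ w.2 * w.1 k)
    (hasDerivAt_sum_neg_succ_mul hφ) P (by fun_prop) (by fun_prop)
    (measurable_gaussianPDF 0 (v 0)) hS
  rw [← gaussianReal_of_var_ne_zero 0 hv] at harea
  dsimp only at harea
  have hsplit := measurePreserving_piFinSuccAbove (fun k => gaussianReal 0 (v k)) 0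
  simp only [Fin.zero_succAbove, ← hP] at hsplit
  simp_rw [sum_eq_zero_iff_sum_neg_succ_eq hφ0]
  refine (hsplit.lintegral_comp_emb (MeasurableEquiv.measurableEmbedding _) _).trans
    (harea.trans (lintegral_congr fun x => ?_))
  rw [lintegral_abs_sum_mul_gaussianPDF hξ hindep _ _ hv]
  congr 2 <;> simp [Fin.sum_univ_succ, hφ0, hφ'0, add_comm]

theorem integral_ncard_zeros_sum
    (hint : IntegrableOn (fun x => kacRiceDensity (∑ k, φ k x ^ 2 * v k)
      (∑ k, φ k x * φ' k x * v k) (∑ k, φ' k x ^ 2 * v k)) S) :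
    ∫ α : Fin (n + 1) → ℝ, ({x | x ∈ S ∧ ∑ k, α k * φ k x = 0}.ncard : ℝ)
        ∂(Measure.pi fun k => gaussianReal 0 (v k)) =
      ∫ x in S, kacRiceDensity (∑ k, φ k x ^ 2 * v k) (∑ k, φ k x * φ' k x * v k)
        (∑ k, φ' k x ^ 2 * v k) := by
  have hmeas := aemeasurable_count_zeros_sum hv hφ0 hφ hφ' hS
  have hlint := lintegral_count_zeros_sum hv hφ0 hφ hφ' hS
  have hφcont (k : Fin (n + 1)) : Continuous (φ k) :=
    continuous_iff_continuousAt.2 fun x => (hφ k x).continuousAt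
  have hzeros (α : Fin (n + 1) → ℝ) : MeasurableSet {x | x ∈ S ∧ ∑ k, α k * φ k x = 0} :=
    hS.inter (measurableSet_eq_fun (by fun_prop) (by fun_prop))
  rw [← ofReal_integral_eq_lintegral_ofReal hint
    (ae_of_all _ fun x => by unfold kacRiceDensity; positivity)] at hlint
  simp_rw [fun α => ncard_eq_toReal_count (hzeros α)]
  rw [integral_toReal hmeas (ae_lt_top' hmeas (hlint ▸ ENNReal.ofReal_ne_top)), hlint,
    ENNReal.toReal_ofReal (integral_nonneg fun x => by unfold kacRiceDensity; positivity)]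

end KacRice

section Kostlan

lemma sum_choose_mul_pow (m : ℕ) (x y : ℝ) :
    ∑ k : Fin (m + 1), x ^ (k : ℕ) * y ^ (k : ℕ) * m.choose k = (1 + x * y) ^ m := by
  rw [Fin.sum_univ_eq_sum_range (fun k => x ^ k * y ^ k * (m.choose k : ℝ)), add_comm 1, add_pow]
  simp only [mul_pow, one_pow, mul_one]

lemma sum_choose_mul_pow_mul_deriv (m : ℕ) (x y : ℝ) :
    ∑ k : Fin (m + 1), x ^ (k : ℕ) * (k * y ^ (k - 1 : ℕ)) * m.choose k =
      m * x * (1 + x * y) ^ (m - 1) := by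
  have hsum : HasDerivAt (fun y : ℝ => ∑ k : Fin (m + 1), x ^ (k : ℕ) * y ^ (k : ℕ) * m.choose k)
      (∑ k : Fin (m + 1), x ^ (k : ℕ) * (k * y ^ (k - 1 : ℕ)) * m.choose k) y :=
    .fun_sum fun k _ => ((hasDerivAt_pow k y).const_mul _).mul_const _
  simp_rw [sum_choose_mul_pow] at hsum
  refine hsum.unique ?_
  exact ((((hasDerivAt_id' y).const_mul x).const_add 1).fun_pow m).congr_deriv (by ring)

lemma sum_choose_mul_deriv_mul_deriv (m : ℕ) (x y : ℝ) :
    ∑ k : Fin (m + 1), (k * x ^ (k - 1 : ℕ)) * (k * y ^ (k - 1 : ℕ)) * m.choose k =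
      m * (1 + x * y) ^ (m - 1) + m * x * ((m - 1 : ℕ) * y * (1 + x * y) ^ (m - 1 - 1)) := by
  have hsum : HasDerivAt
      (fun x : ℝ => ∑ k : Fin (m + 1), x ^ (k : ℕ) * (k * y ^ (k - 1 : ℕ)) * m.choose k)
      (∑ k : Fin (m + 1), (k * x ^ (k - 1 : ℕ)) * (k * y ^ (k - 1 : ℕ)) * m.choose k) x :=
    .fun_sum fun k _ => ((hasDerivAt_pow k x).mul_const _).mul_const _
  simp_rw [sum_choose_mul_pow_mul_deriv] at hsum
  refine hsum.unique ?_
  exact (((hasDerivAt_id' x).const_mul (m : ℝ)).fun_mul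
    ((((hasDerivAt_id' x).mul_const y).const_add 1).fun_pow (m - 1))).congr_deriv (by ring)

lemma kacRiceDensity_kostlan (m : ℕ) (x : ℝ) :
    kacRiceDensity (∑ k : Fin (m + 1), (x ^ (k : ℕ)) ^ 2 * m.choose k)
        (∑ k : Fin (m + 1), x ^ (k : ℕ) * (k * x ^ (k - 1 : ℕ)) * m.choose k)
        (∑ k : Fin (m + 1), (k * x ^ (k - 1 : ℕ)) ^ 2 * m.choose k) =
      √m / Real.pi * (1 + x ^ 2)⁻¹ := by
  rcases m with _ | n
  · simp [kacRiceDensity]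
  have hdet : (1 + x * x) ^ (n + 1) * (((n + 1 : ℕ) : ℝ) * (1 + x * x) ^ n +
      ((n + 1 : ℕ) : ℝ) * x * (n * x * (1 + x * x) ^ (n - 1))) -
        (((n + 1 : ℕ) : ℝ) * x * (1 + x * x) ^ n) ^ 2 = (n + 1 : ℕ) * ((1 + x * x) ^ n) ^ 2 := by
    cases n <;> push_cast [Nat.add_sub_cancel] <;> ring
  simp_rw [pow_two (_ ^ _), pow_two (_ * _)]
  simp only [sum_choose_mul_pow, sum_choose_mul_pow_mul_deriv, sum_choose_mul_deriv_mul_deriv,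
    Nat.add_sub_cancel, kacRiceDensity, hdet]
  have hq : 0 < 1 + x * x := by linarith [mul_self_nonneg x]
  rw [Real.sqrt_mul (by positivity), Real.sqrt_sq (by positivity), pow_two x]
  field_simp
  ring

end Kostlan

/-- (Edelman–Kostlan) The expected number of zeros in `(a,b)` of a degree-`m` real Kostlan
random polynomial `f_α(x) = Σ_{k=0}^m α_k x^k`, whose coefficients `α_k` are independent
centered Gaussians with variance `binom(m,k)`, equals `(√m/π)·(arctan b − arctan a)`. -/
theorem edelman_kostlan (m : ℕ) (hm : 1 ≤ m) (a b : ℝ) (hab : a < b) :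
    ∫ α : Fin (m + 1) → ℝ,
        (({x : ℝ | x ∈ Set.Ioo a b ∧ ∑ k : Fin (m + 1), α k * x ^ (k : ℕ) = 0}.ncard : ℝ))
      ∂(Measure.pi fun k : Fin (m + 1) => gaussianReal 0 (m.choose k)) =
    Real.sqrt m / Real.pi * (Real.arctan b - Real.arctan a) := by
  have hzeros := integral_ncard_zeros_sum (v := fun k : Fin (m + 1) => m.choose k)
    (φ := fun k x => x ^ (k : ℕ)) (φ' := fun k x => k * x ^ (k - 1 : ℕ)) (S := Set.Ioo a b)
    (by simp) (by simp) (fun k x => hasDerivAt_pow k x) (fun k => by fun_prop) measurableSet_Ioo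
  simp only [NNReal.coe_natCast, kacRiceDensity_kostlan] at hzeros
  rw [hzeros (integrable_inv_one_add_sq.const_mul _).integrableOn, integral_const_mul,
    ← integral_Ioc_eq_integral_Ioo, ← intervalIntegral.integral_of_le hab.le,
    integral_inv_one_add_sq]
end

section
/- (Quantitative Bulinskaya lemma for the Kostlan ensemble) Let m ≥ 1 and let μ_m be the product measure on ℝ^{m+1} whose k-th factor is N(0, binom(m,k)), and for a coefficient vector α let f_α(x) = Σ_{k=0}^m α_k x^k. For every R > 0 and δ > 0 there exists τ > 0 such that μ_m { α : there exists x ∈ [−R,R] with |f_α(x)| < τ and |f_α'(x)| < τ } < δ. Equivalently, the probability that min over [−R,R] of max{|f_α(x)|, |f_α'(x)|} is less than τ is less than δ. -/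
open MeasureTheory ProbabilityTheory

/-!
Almost surely `f_α` has no double root: once `α_1, …, α_m` are frozen, a double root forces `-α_0`
to be one of the finitely many critical values of `f_α - α_0`, and the law of `α_0` has no atoms.
The events "`f_α` and `f_α'` are both smaller than `τ` somewhere on `K`" decrease as `τ ↓ 0`, and by
compactness of `K` their intersection is the event that `f_α` has a double root in `K`. Continuity
from above of the measure therefore drives their probabilities to zero.
-/

open Filter Polynomial Set Topology

section NearZeros

variable {Ω X E : Type*} [TopologicalSpace Ω] [MeasurableSpace Ω] [OpensMeasurableSpace Ω]
  [TopologicalSpace X] [NormedAddCommGroup E]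

lemma exists_mem_eq_zero_iff_forall_exists_norm_lt {K : Set X} (hK : IsCompact K) {F : X → E}
    (hF : ContinuousOn F K) :
    (∃ x ∈ K, F x = 0) ↔ ∀ τ > 0, ∃ x ∈ K, ‖F x‖ < τ := by
  refine ⟨fun ⟨x, hx, hFx⟩ τ hτ ↦ ⟨x, hx, by simpa [hFx] using hτ⟩, fun h ↦ ?_⟩
  by_contra! hne
  obtain ⟨τ, hτ, hle⟩ := hK.exists_forall_le' hF.norm fun x hx ↦ norm_pos_iff.2 (hne x hx)
  obtain ⟨x, hx, hlt⟩ := h τ hτ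
  exact (hle x hx).not_gt hlt

theorem tendsto_measure_exists_norm_lt {μ : Measure Ω} [IsFiniteMeasure μ] {K : Set X}
    (hK : IsCompact K) {F : Ω → X → E} (hF : ∀ x ∈ K, Continuous (F · x))
    (hFK : ∀ ω, ContinuousOn (F ω) K) :
    Tendsto (fun τ ↦ μ {ω | ∃ x ∈ K, ‖F ω x‖ < τ}) (𝓝[>] 0)
      (𝓝 (μ {ω | ∃ x ∈ K, F ω x = 0})) := by
  have hopen (τ : ℝ) : IsOpen {ω | ∃ x ∈ K, ‖F ω x‖ < τ} := by
    have : {ω | ∃ x ∈ K, ‖F ω x‖ < τ} = ⋃ x ∈ K, {ω | ‖F ω x‖ < τ} := by ext; simp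
    exact this ▸ isOpen_biUnion fun x hx ↦ isOpen_lt (hF x hx).norm continuous_const
  have hinter : {ω | ∃ x ∈ K, F ω x = 0} = ⋂ τ > 0, {ω | ∃ x ∈ K, ‖F ω x‖ < τ} := by
    ext ω
    simpa using exists_mem_eq_zero_iff_forall_exists_norm_lt hK (hFK ω)
  rw [hinter]
  exact tendsto_measure_biInter_gt (fun τ _ ↦ (hopen τ).measurableSet.nullMeasurableSet)
    (fun _ _ _ hle _ ⟨x, hx, hlt⟩ ↦ ⟨x, hx, hlt.trans_le hle⟩)
    ⟨1, one_pos, measure_ne_top _ _⟩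

end NearZeros

section Projection

variable {Ω X : Type*} [TopologicalSpace Ω] [TopologicalSpace X]

lemma isClosed_image_fst_inter_preimage_snd {S : Set (Ω × X)} (hS : IsClosed S) {K : Set X}
    (hK : IsCompact K) : IsClosed (Prod.fst '' (S ∩ Prod.snd ⁻¹' K)) := by
  have : CompactSpace K := isCompact_iff_compactSpace.1 hK
  have himage : Prod.fst '' (S ∩ Prod.snd ⁻¹' K) =
      Prod.fst '' (Prod.map id ((↑) : K → X) ⁻¹' S) := by
    ext; simp [and_comm]
  rw [himage]
  exact isClosedMap_fst_of_compactSpace _ (hS.preimage (by fun_prop))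

lemma measurableSet_image_fst_of_isClosed [MeasurableSpace Ω] [OpensMeasurableSpace Ω]
    [SigmaCompactSpace X] {S : Set (Ω × X)} (hS : IsClosed S) : MeasurableSet (Prod.fst '' S) := by
  have hcover : S = ⋃ n, S ∩ Prod.snd ⁻¹' compactCovering X n := by
    rw [← inter_iUnion, ← preimage_iUnion, iUnion_compactCovering, preimage_univ, inter_univ]
  rw [hcover, image_iUnion]
  exact .iUnion fun n ↦
    (isClosed_image_fst_inter_preimage_snd hS (isCompact_compactCovering X n)).measurableSet

end Projection

lemma measure_pi_eq_zero_iff_ae_insertNth {n : ℕ} {Y : Fin (n + 1) → Type*}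
    [∀ k, MeasurableSpace (Y k)] (ν : ∀ k, Measure (Y k)) [∀ k, SigmaFinite (ν k)]
    (i : Fin (n + 1)) {S : Set (∀ k, Y k)} (hS : MeasurableSet S) :
    Measure.pi ν S = 0 ↔
      ∀ᵐ β ∂Measure.pi fun j ↦ ν (i.succAbove j), ν i {a | i.insertNth a β ∈ S} = 0 := by
  have hinsert := (measurePreserving_piFinSuccAbove ν i).symm
  have hS' := hinsert.measurable hS
  rw [← hinsert.measure_preimage_equiv, Measure.prod_apply_symm hS',
    lintegral_eq_zero_iff (measurable_measure_prodMk_right hS')]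
  rfl

section Jet

variable {R : Type*}

/-- The one-jet `(p(x), p'(x))` of a polynomial at a point. It vanishes exactly where `p` has a
multiple root (everywhere, if `p = 0`), and over `ℝ` its sup norm is `max |p(x)| |p'(x)|`. -/
noncomputable def oneJet [Semiring R] (p : R[X]) (x : R) : R × R :=
  (p.eval x, p.derivative.eval x)

lemma oneJet_eq_zero_iff [Semiring R] {p : R[X]} {x : R} :
    oneJet p x = 0 ↔ p.IsRoot x ∧ p.derivative.IsRoot x :=
  Prod.mk_eq_zero

lemma norm_oneJet_lt_iff {p : ℝ[X]} {x τ : ℝ} :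
    ‖oneJet p x‖ < τ ↔ |p.eval x| < τ ∧ |deriv (fun y ↦ p.eval y) x| < τ := by
  rw [oneJet, Prod.norm_mk, max_lt_iff, p.deriv, Real.norm_eq_abs, Real.norm_eq_abs]

lemma finite_image_eval_setOf_isRoot_derivative [CommRing R] [IsDomain R] [IsAddTorsionFree R]
    (p : R[X]) : (p.eval '' {x | p.derivative.IsRoot x}).Finite := by
  by_cases hp : p.derivative = 0
  · rw [eq_C_of_derivative_eq_zero hp]
    refine (finite_singleton (p.coeff 0)).subset ?_
    rintro _ ⟨x, -, rfl⟩
    exact eval_C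
  · exact (finite_setOfPred_isRoot hp).image _

lemma finite_setOf_exists_oneJet_C_add_eq_zero [CommRing R] [IsDomain R] [IsAddTorsionFree R]
    (p : R[X]) : {a | ∃ x, oneJet (C a + p) x = 0}.Finite := by
  refine (finite_image_eval_setOf_isRoot_derivative p).neg.subset ?_
  rintro a ⟨x, hx⟩
  obtain ⟨hroot, hderiv⟩ := oneJet_eq_zero_iff.1 hx
  have hvalue : a + p.eval x = 0 := by simpa using hroot
  exact ⟨x, by simpa using hderiv, eq_neg_of_add_eq_zero_right hvalue⟩

lemma eval_ofFn [Semiring R] [DecidableEq R] {n : ℕ} (α : Fin n → R) (x : R) :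
    (ofFn n α).eval x = ∑ k, α k * x ^ (k : ℕ) := by
  simp [ofFn_eq_sum_monomial, eval_finsetSum]

lemma ofFn_cons [Semiring R] [DecidableEq R] {n : ℕ} (a : R) (β : Fin n → R) :
    ofFn (n + 1) (Fin.cons a β) = C a + X * ofFn n β := by
  simp [ofFn_eq_sum_monomial, Fin.sum_univ_succ, Finset.mul_sum, X_mul_monomial]

lemma continuous_oneJet_ofFn [Semiring R] [DecidableEq R] [TopologicalSpace R]
    [IsTopologicalSemiring R] (n : ℕ) :
    Continuous fun q : (Fin n → R) × R ↦ oneJet (ofFn n q.1) q.2 := by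
  simp only [oneJet, ofFn_eq_sum_monomial, derivative_sum, derivative_monomial, eval_finsetSum,
    eval_monomial]
  fun_prop

end Jet

section RandomPolynomial

variable {m : ℕ} (ν : Fin (m + 1) → Measure ℝ)

theorem ae_oneJet_ofFn_ne_zero [∀ k, SigmaFinite (ν k)] [NullSingletonClass (ν 0)] :
    ∀ᵐ α ∂Measure.pi ν, ∀ x, oneJet (ofFn (m + 1) α) x ≠ 0 := by
  have hmeas : MeasurableSet {α : Fin (m + 1) → ℝ | ∃ x, oneJet (ofFn (m + 1) α) x = 0} := by
    simpa [image] using measurableSet_image_fst_of_isClosed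
      (isClosed_singleton.preimage (continuous_oneJet_ofFn (R := ℝ) (m + 1)) (t := {0}))
  have hnull : Measure.pi ν {α | ∃ x, oneJet (ofFn (m + 1) α) x = 0} = 0 := by
    refine (measure_pi_eq_zero_iff_ae_insertNth ν 0 hmeas).2 (.of_forall fun β ↦ ?_)
    simpa [ofFn_cons] using
      (finite_setOf_exists_oneJet_C_add_eq_zero (X * ofFn m β)).measure_zero (ν 0)
  simpa [ae_iff] using hnull

theorem bulinskaya_kostlan_general [∀ k, IsFiniteMeasure (ν k)] [NullSingletonClass (ν 0)]
    {K : Set ℝ} (hK : IsCompact K) {ε : ENNReal} (hε : 0 < ε) :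
    ∃ τ : ℝ, 0 < τ ∧
      Measure.pi ν {α | ∃ x ∈ K,
        |∑ k : Fin (m + 1), α k * x ^ (k : ℕ)| < τ ∧
        |deriv (fun y : ℝ ↦ ∑ k : Fin (m + 1), α k * y ^ (k : ℕ)) x| < τ} < ε := by
  simp only [← eval_ofFn, ← norm_oneJet_lt_iff]
  have hcont := continuous_oneJet_ofFn (R := ℝ) (m + 1)
  have hnull : Measure.pi ν {α | ∃ x ∈ K, oneJet (ofFn (m + 1) α) x = 0} = 0 :=
    measure_eq_zero_iff_ae_notMem.2 <|
      (ae_oneJet_ofFn_ne_zero ν).mono fun _ hne ⟨x, _, hx⟩ ↦ hne x hx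
  have hlim := tendsto_measure_exists_norm_lt (μ := Measure.pi ν) hK
    (F := fun α x ↦ oneJet (ofFn (m + 1) α) x)
    (fun x _ ↦ hcont.comp (.prodMk_left x)) (fun α ↦ (hcont.comp (.prodMk_right α)).continuousOn)
  rw [hnull] at hlim
  exact (eventually_mem_nhdsWithin.and (hlim.eventually_lt_const hε)).exists

end RandomPolynomial

/-- (Quantitative Bulinskaya lemma for the Kostlan ensemble) Let `μ_m` be the Kostlan measure
on coefficient vectors and `f_α(x) = Σ_k α_k x^k`. For every `R > 0` and `δ > 0` there exists
`τ > 0` such that the probability that some `x ∈ [−R,R]` has `|f_α(x)| < τ` and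
`|f_α'(x)| < τ` is less than `δ`. -/
theorem bulinskaya_kostlan (m : ℕ) (hm : 1 ≤ m) (R δ : ℝ) (hR : 0 < R) (hδ : 0 < δ) :
    ∃ τ : ℝ, 0 < τ ∧
      (Measure.pi fun k : Fin (m + 1) => gaussianReal 0 (m.choose k))
          {α : Fin (m + 1) → ℝ | ∃ x ∈ Set.Icc (-R) R,
            |∑ k : Fin (m + 1), α k * x ^ (k : ℕ)| < τ ∧
            |deriv (fun y : ℝ => ∑ k : Fin (m + 1), α k * y ^ (k : ℕ)) x| < τ}
        < ENNReal.ofReal δ := by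
  have : NullSingletonClass (gaussianReal 0 (m.choose (0 : Fin (m + 1)))) :=
    nullSingletonClass_gaussianReal (by simp)
  exact bulinskaya_kostlan_general _ isCompact_Icc (ENNReal.ofReal_pos.2 hδ)
end

section
/- Let R₀ > 0 and R = R₀ + 1. Suppose f : ℝ → ℝ is continuously differentiable and there exists τ > 0 such that max{|f(x)|, |f'(x)|} ≥ τ for all x ∈ [−R, R]. Suppose g : ℝ → ℝ is continuous with |g(x)| ≤ τ/2 for all x ∈ [−R, R]. Then there exists an injective map from the set {x ∈ (−R₀, R₀) : f(x) = 0} into the set {x ∈ (−R, R) : f(x) + g(x) = 0}; in particular, f + g has at least as many zeros in (−R, R) as f has in (−R₀, R₀). -/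
/-!
As long as `|f| < τ` we have `|f'| ≥ τ`, so by the mean value theorem `f` expands distances by a
factor of at least `τ`. Hence, starting from a zero `x` of `f` and moving a distance `r` to either
side, `|f|` reaches every level `δ ≤ τ * r` below `τ`. Let `a ≤ x ≤ b` be the first points where
`|f| = δ`. As `f` is injective on `[a, b]`, the values `f a` and `f b` are `δ` and `-δ` in some
order, so a perturbation `g` with `|g| ≤ δ` leaves a zero `y` of `f + g` in `[a, b]`. Finally `y`
determines `x`: between two zeros of `f` with the same `y` one would have `|f| < τ` throughout,
which contradicts expansion.
-/

open Set

section FirstHit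

variable {α β : Type*} [ConditionallyCompleteLinearOrder α] [TopologicalSpace α] [OrderTopology α]
  [DenselyOrdered α] [LinearOrder β] [TopologicalSpace β] [OrderClosedTopology β]
  {h : α → β} {x c : α} {δ : β}

lemma exists_mem_Icc_eq_and_forall_Icc_le (hxc : x ≤ c) (hh : ContinuousOn h (Icc x c))
    (hx : h x ≤ δ) (hc : δ ≤ h c) :
    ∃ b ∈ Icc x c, h b = δ ∧ ∀ t ∈ Icc x b, h t ≤ δ := by
  have hcompact : IsCompact (Icc x c ∩ h ⁻¹' {δ}) :=
    isCompact_Icc.of_isClosed_subset (hh.preimage_isClosed_of_isClosed isClosed_Icc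
      isClosed_singleton) inter_subset_left
  obtain ⟨b, ⟨hb, hbδ⟩, hmin⟩ :=
    hcompact.exists_isLeast (intermediate_value_Icc hxc hh ⟨hx, hc⟩)
  refine ⟨b, hb, hbδ, fun t ht => ?_⟩
  by_contra! hlt
  have htc : t ≤ c := ht.2.trans hb.2
  obtain ⟨s, hs, hsδ⟩ :=
    intermediate_value_Icc ht.1 (hh.mono (Icc_subset_Icc_right htc)) ⟨hx, hlt.le⟩
  have hbs : b ≤ s := hmin ⟨⟨hs.1, hs.2.trans htc⟩, hsδ⟩
  have htb : t = b := le_antisymm ht.2 (hbs.trans hs.2)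
  exact hlt.ne' (htb ▸ hbδ)

lemma exists_mem_uIcc_eq_and_forall_uIcc_le (hh : ContinuousOn h (uIcc x c))
    (hx : h x ≤ δ) (hc : δ ≤ h c) :
    ∃ b ∈ uIcc x c, h b = δ ∧ ∀ t ∈ uIcc x b, h t ≤ δ := by
  rcases le_total x c with hxc | hcx
  · rw [uIcc_of_le hxc] at hh ⊢
    obtain ⟨b, hb, hbδ, hle⟩ := exists_mem_Icc_eq_and_forall_Icc_le hxc hh hx hc
    exact ⟨b, hb, hbδ, by rwa [uIcc_of_le hb.1]⟩
  · rw [uIcc_of_ge hcx] at hh ⊢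
    obtain ⟨b, hb, hbδ, hle⟩ := exists_mem_Icc_eq_and_forall_Icc_le (α := αᵒᵈ)
      (h := h ∘ OrderDual.ofDual) (x := OrderDual.toDual x) (c := OrderDual.toDual c)
      hcx (by rw [Icc_toDual]; exact hh) hx hc
    refine ⟨OrderDual.ofDual b, ⟨hb.2, hb.1⟩, hbδ, fun t ht => ?_⟩
    rw [uIcc_of_ge (show OrderDual.ofDual b ≤ x from hb.1)] at ht
    exact hle (OrderDual.toDual t) ⟨ht.2, ht.1⟩

end FirstHit

section Expansion

variable {f g : ℝ → ℝ} {τ δ r : ℝ}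

lemma mul_abs_sub_le_abs_image_sub_of_le_abs_deriv {s : Set ℝ} (hs : s.OrdConnected)
    (hf : ContinuousOn f s) (hτ : 0 < τ) (hf' : ∀ t ∈ interior s, τ ≤ |deriv f t|)
    {x y : ℝ} (hx : x ∈ s) (hy : y ∈ s) : τ * |y - x| ≤ |f y - f x| := by
  wlog hxy : x < y generalizing x y
  · rcases (not_lt.1 hxy).eq_or_lt with rfl | hyx
    · simp
    · simpa only [abs_sub_comm] using this hy hx hyx
  have hsub : Icc x y ⊆ s := hs.out hx hy
  have hint : Ioo x y ⊆ interior s := interior_Icc (a := x) (b := y) ▸ interior_mono hsub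
  have hdiff : DifferentiableOn ℝ f (Ioo x y) := fun t ht =>
    (differentiableAt_of_deriv_ne_zero
      (abs_pos.1 (hτ.trans_le (hf' t (hint ht))))).differentiableWithinAt
  obtain ⟨t, ht, hslope⟩ := exists_deriv_eq_slope f hxy (hf.mono hsub) hdiff
  calc τ * |y - x| ≤ |deriv f t| * |y - x| := by gcongr; exact hf' t (hint ht)
    _ = |f y - f x| := by
      rw [← abs_mul, hslope, div_mul_cancel₀ _ (sub_ne_zero.2 hxy.ne')]

lemma mul_abs_sub_le_abs_image_sub_of_abs_lt {s : Set ℝ} (hs : s.OrdConnected)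
    (hf : ContinuousOn f s) (hτ : 0 < τ) (hfτ : ∀ t ∈ interior s, τ ≤ max |f t| |deriv f t|)
    (hlt : ∀ t ∈ s, |f t| < τ) {x y : ℝ} (hx : x ∈ s) (hy : y ∈ s) :
    τ * |y - x| ≤ |f y - f x| :=
  mul_abs_sub_le_abs_image_sub_of_le_abs_deriv hs hf hτ
    (fun t ht => (le_max_iff.1 (hfτ t ht)).resolve_left (hlt t (interior_subset ht)).not_ge) hx hy

lemma injOn_of_abs_lt {s : Set ℝ} (hs : s.OrdConnected) (hf : ContinuousOn f s) (hτ : 0 < τ)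
    (hfτ : ∀ t ∈ interior s, τ ≤ max |f t| |deriv f t|) (hlt : ∀ t ∈ s, |f t| < τ) :
    InjOn f s := by
  intro x hx y hy hxy
  have hle := mul_abs_sub_le_abs_image_sub_of_abs_lt hs hf hτ hfτ hlt hx hy
  rw [hxy, sub_self, abs_zero] at hle
  exact (sub_eq_zero.1 (abs_nonpos_iff.1 (nonpos_of_mul_nonpos_right hle hτ))).symm

lemma exists_mem_uIcc_abs_eq_and_forall_uIcc_abs_le {x c : ℝ} (hδ : 0 ≤ δ) (hδτ : δ < τ)
    (hf : ContinuousOn f (uIcc x c))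
    (hfτ : ∀ t ∈ interior (uIcc x c), τ ≤ max |f t| |deriv f t|)
    (hx : f x = 0) (hc : δ ≤ τ * |c - x|) :
    ∃ b ∈ uIcc x c, |f b| = δ ∧ ∀ t ∈ uIcc x b, |f t| ≤ δ := by
  obtain ⟨d, hd, hδd⟩ : ∃ d ∈ uIcc x c, δ ≤ |f d| := by
    by_cases! hlt : ∀ t ∈ uIcc x c, |f t| < τ
    · have hle := mul_abs_sub_le_abs_image_sub_of_abs_lt ordConnected_uIcc hf (hδ.trans_lt hδτ)
        hfτ hlt left_mem_uIcc right_mem_uIcc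
      rw [hx, sub_zero] at hle
      exact ⟨c, right_mem_uIcc, hc.trans hle⟩
    · obtain ⟨d, hd, hτd⟩ := hlt
      exact ⟨d, hd, hδτ.le.trans hτd⟩
  have hsub : uIcc x d ⊆ uIcc x c := uIcc_subset_uIcc_left hd
  obtain ⟨b, hb, hbδ, hle⟩ := exists_mem_uIcc_eq_and_forall_uIcc_le (h := fun t => |f t|)
    (hf.mono hsub).abs (by simpa [hx] using hδ) hδd
  exact ⟨b, hsub hb, hbδ, hle⟩

lemma exists_Icc_image_eq_neg_and_forall_abs_le {x : ℝ} (hr : 0 ≤ r) (hδ : 0 ≤ δ) (hδτ : δ < τ)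
    (hδr : δ ≤ τ * r) (hf : ContinuousOn f (Icc (x - r) (x + r)))
    (hfτ : ∀ t ∈ interior (Icc (x - r) (x + r)), τ ≤ max |f t| |deriv f t|) (hx : f x = 0) :
    ∃ a ∈ Icc (x - r) x, ∃ b ∈ Icc x (x + r),
      |f b| = δ ∧ f a = -f b ∧ ∀ t ∈ Icc a b, |f t| ≤ δ := by
  have hxl : uIcc x (x - r) = Icc (x - r) x := uIcc_of_ge (by linarith)
  have hxr : uIcc x (x + r) = Icc x (x + r) := uIcc_of_le (by linarith)
  have hsubl : uIcc x (x - r) ⊆ Icc (x - r) (x + r) := hxl ▸ Icc_subset_Icc_right (by linarith)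
  have hsubr : uIcc x (x + r) ⊆ Icc (x - r) (x + r) := hxr ▸ Icc_subset_Icc_left (by linarith)
  obtain ⟨a, ha, haδ, hale⟩ := exists_mem_uIcc_abs_eq_and_forall_uIcc_abs_le hδ hδτ
    (hf.mono hsubl) (fun t ht => hfτ t (interior_mono hsubl ht)) hx
    (by simpa [abs_of_nonneg hr] using hδr)
  obtain ⟨b, hb, hbδ, hble⟩ := exists_mem_uIcc_abs_eq_and_forall_uIcc_abs_le hδ hδτ
    (hf.mono hsubr) (fun t ht => hfτ t (interior_mono hsubr ht)) hx
    (by simpa [abs_of_nonneg hr] using hδr)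
  rw [hxl] at ha
  rw [hxr] at hb
  rw [uIcc_of_ge ha.2] at hale
  rw [uIcc_of_le hb.1] at hble
  have hle : ∀ t ∈ Icc a b, |f t| ≤ δ := fun t ht =>
    (le_total t x).elim (fun htx => hale t ⟨ht.1, htx⟩) fun hxt => hble t ⟨hxt, ht.2⟩
  have hab : a ≤ b := ha.2.trans hb.1
  have hsub : Icc a b ⊆ Icc (x - r) (x + r) := Icc_subset_Icc ha.1 hb.2
  have hinj : InjOn f (Icc a b) := injOn_of_abs_lt ordConnected_Icc (hf.mono hsub)
    (hδ.trans_lt hδτ) (fun t ht => hfτ t (interior_mono hsub ht))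
    fun t ht => (hle t ht).trans_lt hδτ
  refine ⟨a, ha, b, hb, hbδ, ?_, hle⟩
  rcases abs_eq_abs.1 (haδ.trans hbδ.symm) with heq | hneg
  · obtain rfl : a = b := hinj (left_mem_Icc.2 hab) (right_mem_Icc.2 hab) heq
    obtain rfl : a = x := le_antisymm ha.2 hb.1
    rw [hx, neg_zero]
  · exact hneg

lemma exists_add_eq_zero_of_image_eq_neg {a b : ℝ} (hab : a ≤ b) (hf : ContinuousOn f (Icc a b))
    (hg : ContinuousOn g (Icc a b)) (hneg : f a = -f b) (hga : |g a| ≤ |f b|)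
    (hgb : |g b| ≤ |f b|) : ∃ y ∈ Icc a b, f y + g y = 0 := by
  have ha : a ∈ Icc a b := left_mem_Icc.2 hab
  have hb : b ∈ Icc a b := right_mem_Icc.2 hab
  rw [abs_le] at hga hgb
  rcases abs_cases (f b) with ⟨habs, -⟩ | ⟨habs, -⟩
  · exact isPreconnected_Icc.intermediate_value₂ ha hb (hf.add hg) continuousOn_const
      (by linarith) (by linarith)
  · exact isPreconnected_Icc.intermediate_value₂ hb ha (hf.add hg) continuousOn_const
      (by linarith) (by linarith)

lemma exists_add_eq_zero_and_forall_uIcc_abs_lt {x : ℝ} (hr : 0 ≤ r) (hδτ : δ < τ)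
    (hδr : δ ≤ τ * r) (hf : ContinuousOn f (Icc (x - r) (x + r)))
    (hfτ : ∀ t ∈ interior (Icc (x - r) (x + r)), τ ≤ max |f t| |deriv f t|)
    (hg : ContinuousOn g (Icc (x - r) (x + r)))
    (hgδ : ∀ t ∈ Icc (x - r) (x + r), |g t| ≤ δ) (hx : f x = 0) :
    ∃ y ∈ Icc (x - r) (x + r), f y + g y = 0 ∧ ∀ t ∈ uIcc x y, |f t| < τ := by
  have hδ : 0 ≤ δ := (abs_nonneg _).trans (hgδ x ⟨by linarith, by linarith⟩)
  obtain ⟨a, ha, b, hb, hbδ, hneg, hle⟩ :=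
    exists_Icc_image_eq_neg_and_forall_abs_le hr hδ hδτ hδr hf hfτ hx
  have hab : a ≤ b := ha.2.trans hb.1
  have hsub : Icc a b ⊆ Icc (x - r) (x + r) := Icc_subset_Icc ha.1 hb.2
  obtain ⟨y, hy, hy0⟩ := exists_add_eq_zero_of_image_eq_neg hab (hf.mono hsub) (hg.mono hsub) hneg
    (hbδ ▸ hgδ a (hsub (left_mem_Icc.2 hab))) (hbδ ▸ hgδ b (hsub (right_mem_Icc.2 hab)))
  exact ⟨y, hsub hy, hy0, fun t ht =>
    (hle t (uIcc_subset_Icc ⟨ha.2, hb.1⟩ hy ht)).trans_lt hδτ⟩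

lemma eq_of_image_eq_of_forall_uIcc_abs_lt {u v y : ℝ}
    (hf : ContinuousOn f (uIcc u y ∪ uIcc v y))
    (hfτ : ∀ t ∈ interior (uIcc u y ∪ uIcc v y), τ ≤ max |f t| |deriv f t|)
    (hu : ∀ t ∈ uIcc u y, |f t| < τ) (hv : ∀ t ∈ uIcc v y, |f t| < τ) (huv : f u = f v) :
    u = v := by
  have hsub : uIcc u v ⊆ uIcc u y ∪ uIcc v y :=
    uIcc_comm y v ▸ uIcc_subset_uIcc_union_uIcc
  have hτ : 0 < τ := (abs_nonneg _).trans_lt (hu u left_mem_uIcc)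
  exact injOn_of_abs_lt ordConnected_uIcc (hf.mono hsub) hτ
    (fun t ht => hfτ t (interior_mono hsub ht)) (fun t ht => (hsub ht).elim (hu t) (hv t))
    left_mem_uIcc right_mem_uIcc huv

end Expansion

/-- Since `deriv f x` is `0` where `f` is not differentiable, `hfτ` makes `f` differentiable with
`|f' x| ≥ τ` at every interior point of `U` with `|f x| < τ`. -/
theorem perturbation_preserves_zeros_general {f g : ℝ → ℝ} {S U : Set ℝ} {τ δ r : ℝ}
    (hr : 0 ≤ r) (hδτ : δ < τ) (hδr : δ ≤ τ * r)
    (hSU : ∀ x ∈ S, Icc (x - r) (x + r) ⊆ U) (hf : ContinuousOn f U)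
    (hfτ : ∀ x ∈ interior U, τ ≤ max |f x| |deriv f x|)
    (hg : ContinuousOn g U) (hgδ : ∀ x ∈ U, |g x| ≤ δ) :
    ∃ φ : {x : ℝ | x ∈ S ∧ f x = 0} → {x : ℝ | x ∈ U ∧ f x + g x = 0},
      Function.Injective φ := by
  have hnear (x : {x : ℝ | x ∈ S ∧ f x = 0}) :
      ∃ y ∈ Icc (x - r) (x + r), f y + g y = 0 ∧ ∀ t ∈ uIcc (x : ℝ) y, |f t| < τ :=
    have hxU := hSU x x.2.1
    exists_add_eq_zero_and_forall_uIcc_abs_lt hr hδτ hδr (hf.mono hxU)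
      (fun t ht => hfτ t (interior_mono hxU ht)) (hg.mono hxU) (fun t ht => hgδ t (hxU ht)) x.2.2
  choose φ hφ hφ0 hφτ using hnear
  have hsub (x : {x : ℝ | x ∈ S ∧ f x = 0}) : uIcc (x : ℝ) (φ x) ⊆ U :=
    (uIcc_subset_Icc ⟨by linarith, by linarith⟩ (hφ x)).trans (hSU x x.2.1)
  refine ⟨fun x => ⟨φ x, hSU x x.2.1 (hφ x), hφ0 x⟩, fun u v huv => Subtype.ext ?_⟩
  have hφuv : φ v = φ u := congrArg Subtype.val huv.symm
  have hunion : uIcc (u : ℝ) (φ u) ∪ uIcc (v : ℝ) (φ u) ⊆ U :=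
    union_subset (hsub u) (hφuv ▸ hsub v)
  exact eq_of_image_eq_of_forall_uIcc_abs_lt (hf.mono hunion)
    (fun t ht => hfτ t (interior_mono hunion ht)) (hφτ u) (hφuv ▸ hφτ v)
    (u.2.2.trans v.2.2.symm)

/-- Let `R = R₀ + 1`. If `f` is `C¹` with `max{|f|,|f'|} ≥ τ > 0` on `[−R,R]` and `g` is
continuous with `|g| ≤ τ/2` on `[−R,R]`, then there is an injection from the zeros of `f`
in `(−R₀,R₀)` into the zeros of `f + g` in `(−R,R)`. -/
theorem perturbation_preserves_zeros (R₀ : ℝ) (hR₀ : 0 < R₀) (R : ℝ) (hR : R = R₀ + 1)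
    (f : ℝ → ℝ) (hf : ContDiff ℝ 1 f) (τ : ℝ) (hτ : 0 < τ)
    (hfτ : ∀ x ∈ Set.Icc (-R) R, τ ≤ max |f x| |deriv f x|)
    (g : ℝ → ℝ) (hg : Continuous g) (hgτ : ∀ x ∈ Set.Icc (-R) R, |g x| ≤ τ / 2) :
    ∃ φ : {x : ℝ | x ∈ Set.Ioo (-R₀) R₀ ∧ f x = 0} →
          {x : ℝ | x ∈ Set.Ioo (-R) R ∧ f x + g x = 0},
      Function.Injective φ :=
  perturbation_preserves_zeros_general zero_le_one (half_lt_self hτ) (by linarith)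
    (fun x hx => Icc_subset_Ioo (by linarith [hx.1]) (by linarith [hx.2]))
    hf.continuous.continuousOn (fun x hx => hfτ x (Ioo_subset_Icc_self (interior_subset hx)))
    hg.continuousOn fun x hx => hgτ x (Ioo_subset_Icc_self hx)
end

section
/- Let n > m be integers with m ≥ 2 and n ≥ 4, let ε > 0, and let q be a complex polynomial of degree m. Then the set of zeros {z ∈ ℂ : ε z^n + q(z) + conj(q(z)) = 0} is finite and has cardinality at most n(m+2), which is at most 2m(n−1) + n. -/
open Polynomial Complex

open scoped ComplexConjugate

/-!
In an equation `a * z ^ n + u z = 0` with `u` real-valued, `a * z ^ n` is real, which forces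
`(z / conj z) ^ n = conj a / a`. So `z` lies on one of `n` lines through the origin, one for each
`n`-th root of `conj a / a`. If `u` is polynomial of degree at most `m < n` along each line, the
equation becomes `c * t ^ n + r t = 0` with `c ≠ 0` real and `deg r ≤ m`. The `(m + 1)`-st
derivative of the left side is a nonzero monomial, with at most one distinct root, so `m + 1`
applications of Rolle's theorem leave at most `m + 2` distinct real roots. This is also the bound
that Descartes' rule of signs gives for the two halves of the line and the origin together.
-/

section RealRoots

lemma card_roots_toFinset_le_iterate_derivative (p : ℝ[X]) (k : ℕ) :
    p.roots.toFinset.card ≤ (derivative^[k] p).roots.toFinset.card + k := by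
  induction k with
  | zero => rfl
  | succ k ih =>
    have rolle := card_roots_toFinset_le_derivative (derivative^[k] p)
    rw [Function.iterate_succ_apply']
    lia

lemma card_roots_toFinset_C_mul_X_pow_le_one {R : Type*} [CommRing R] [IsDomain R] [DecidableEq R]
    (c : R) (k : ℕ) : (C c * X ^ k).roots.toFinset.card ≤ 1 := by
  rw [Finset.card_le_one_iff_subset_singleton]
  refine ⟨0, fun x hx => ?_⟩
  obtain ⟨hne, hroot⟩ := mem_roots'.1 (Multiset.mem_toFinset.1 hx)
  have hc : c ≠ 0 := by
    rintro rfl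
    simp at hne
  have hxk : x ^ k = 0 := by simpa [hc] using hroot
  exact Finset.mem_singleton.2 (eq_zero_of_pow_eq_zero hxk)

lemma iterate_derivative_C_mul_X_pow_add {R : Type*} [CommSemiring R] {k : ℕ} (n : ℕ) (c : R)
    {r : R[X]} (hr : r.natDegree < k) :
    derivative^[k] (C c * X ^ n + r) = C (c * n.descFactorial k) * X ^ (n - k) := by
  rw [iterate_map_add, iterate_derivative_eq_zero hr, iterate_derivative_C_mul,
    iterate_derivative_X_pow_eq_C_mul, add_zero, C_mul, mul_assoc]

lemma card_roots_toFinset_C_mul_X_pow_add_le (n : ℕ) (c : ℝ) (r : ℝ[X]) :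
    (C c * X ^ n + r).roots.toFinset.card ≤ r.natDegree + 2 := by
  have rolle := card_roots_toFinset_le_iterate_derivative (C c * X ^ n + r) (r.natDegree + 1)
  rw [iterate_derivative_C_mul_X_pow_add n c (Nat.lt_succ_self _)] at rolle
  have monomial_roots := card_roots_toFinset_C_mul_X_pow_le_one
    (c * n.descFactorial (r.natDegree + 1)) (n - (r.natDegree + 1))
  lia

lemma C_mul_X_pow_add_ne_zero {R : Type*} [Semiring R] {n : ℕ} {c : R} (hc : c ≠ 0) {r : R[X]}
    (hr : r.natDegree < n) : C c * X ^ n + r ≠ 0 := fun h => hc <| by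
  simpa [coeff_eq_zero_of_natDegree_lt hr] using congrArg (coeff · n) h

end RealRoots

section Lines

variable {n : ℕ} {a w z : ℂ}

/-- For `a ≠ 0` and `0 < n`, one unit vector on each of the `n` lines through the origin that make
up `{z | (a * z ^ n).im = 0}`. A line is encoded by the common value `s` of `z / conj z` on it, and
its two unit vectors are the square roots of `s`. -/
noncomputable def lineDirections (n : ℕ) (a : ℂ) : Finset ℂ :=
  (nthRoots n (conj a / a)).toFinset.image fun s => s ^ (2⁻¹ : ℂ)

lemma card_lineDirections_le (n : ℕ) (a : ℂ) : (lineDirections n a).card ≤ n :=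
  Finset.card_image_le.trans <| (Multiset.toFinset_card_le _).trans <| card_nthRoots _ _

lemma sq_pow_eq_of_mem_lineDirections (hn : 0 < n) (hw : w ∈ lineDirections n a) :
    (w ^ 2) ^ n = conj a / a := by
  obtain ⟨s, hs, rfl⟩ := Finset.mem_image.1 hw
  rw [cpow_ofNat_inv_pow]
  exact (mem_nthRoots hn).1 (Multiset.mem_toFinset.1 hs)

lemma exists_mem_lineDirections_sq_eq (hn : 0 < n) {s : ℂ} (hs : s ^ n = conj a / a) :
    ∃ w ∈ lineDirections n a, w ^ 2 = s :=
  ⟨_, Finset.mem_image_of_mem _ (Multiset.mem_toFinset.2 ((mem_nthRoots hn).2 hs)),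
    cpow_ofNat_inv_pow s 2⟩

lemma exists_ofReal_eq_mul_pow_of_mem_lineDirections (hn : 0 < n) (ha : a ≠ 0)
    (hw : w ∈ lineDirections n a) : ∃ c : ℝ, c ≠ 0 ∧ a * w ^ n = c := by
  have hsq : (a * w ^ n) ^ 2 = (‖a‖ : ℂ) ^ 2 := calc
    (a * w ^ n) ^ 2 = a ^ 2 * (w ^ 2) ^ n := by ring
    _ = a ^ 2 * (conj a / a) := by rw [sq_pow_eq_of_mem_lineDirections hn hw]
    _ = a * conj a := by field_simp
    _ = (‖a‖ : ℂ) ^ 2 := mul_conj' a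
  have hna : ‖a‖ ≠ 0 := norm_ne_zero_iff.2 ha
  rcases sq_eq_sq_iff_eq_or_eq_neg.1 hsq with h | h
  · exact ⟨‖a‖, hna, h⟩
  · exact ⟨-‖a‖, neg_ne_zero.2 hna, by rw [h, ofReal_neg]⟩

lemma exists_pow_eq_conj_div_self_of_im_mul_pow_eq_zero (hn : 0 < n) (ha : a ≠ 0)
    (hz : (a * z ^ n).im = 0) : ∃ s : ℂ, s ^ n = conj a / a ∧ s * conj z = z := by
  rcases eq_or_ne z 0 with rfl | hz0
  · obtain ⟨s, hs⟩ := IsAlgClosed.exists_pow_nat_eq (conj a / a) hn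
    exact ⟨s, hs, by simp⟩
  · have hcz : conj z ≠ 0 := by simpa using hz0
    have hreal : conj a * conj z ^ n = a * z ^ n := by
      simpa only [map_mul, map_pow] using conj_eq_iff_im.2 hz
    refine ⟨z / conj z, ?_, div_mul_cancel₀ z hcz⟩
    rw [div_pow, div_eq_div_iff (pow_ne_zero n hcz) ha, hreal, mul_comm]

lemma exists_eq_ofReal_mul_of_im_mul_pow_eq_zero (hn : 0 < n) (ha : a ≠ 0)
    (hz : (a * z ^ n).im = 0) : ∃ w ∈ lineDirections n a, ∃ t : ℝ, z = t * w := by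
  obtain ⟨s, hs, hsz⟩ := exists_pow_eq_conj_div_self_of_im_mul_pow_eq_zero hn ha hz
  obtain ⟨w, hw, rfl⟩ := exists_mem_lineDirections_sq_eq hn hs
  have hsq : z ^ 2 = (‖z‖ * w) ^ 2 := calc
    z ^ 2 = w ^ 2 * conj z * z := by rw [hsz, sq]
    _ = w ^ 2 * (z * conj z) := by ring
    _ = (‖z‖ * w) ^ 2 := by rw [mul_conj', mul_pow, mul_comm]
  rcases sq_eq_sq_iff_eq_or_eq_neg.1 hsq with h | h
  · exact ⟨w, hw, ‖z‖, h⟩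
  · exact ⟨w, hw, -‖z‖, by rw [ofReal_neg, neg_mul]; exact h⟩

end Lines

lemma exists_real_polynomial_eval_eq_re (q : ℂ[X]) :
    ∃ r : ℝ[X], r.natDegree ≤ q.natDegree ∧ ∀ t : ℝ, r.eval t = (q.eval (t : ℂ)).re := by
  refine ⟨∑ i ∈ Finset.range (q.natDegree + 1), C (q.coeff i).re * X ^ i,
    natDegree_sum_le_of_forall_le _ _ fun i hi => ?_, fun t => ?_⟩
  · exact (natDegree_C_mul_X_pow_le _ _).trans (Finset.mem_range_succ_iff.1 hi)
  · rw [eval_finsetSum, eval_eq_sum_range, re_sum]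
    simp only [eval_C_mul, eval_X_pow, ← ofReal_pow, re_mul_ofReal]

lemma exists_real_polynomial_eval_eq_two_mul_re (q : ℂ[X]) (w : ℂ) :
    ∃ r : ℝ[X], r.natDegree ≤ q.natDegree ∧ ∀ t : ℝ, r.eval t = 2 * (q.eval (t * w)).re := by
  obtain ⟨r, hdeg, hr⟩ := exists_real_polynomial_eval_eq_re (C 2 * q.comp (X * C w))
  refine ⟨r, hdeg.trans <| (natDegree_C_mul_le _ _).trans ?_, fun t => ?_⟩
  · rw [natDegree_comp]
    exact mul_le_of_le_one_right' (natDegree_mul_C_le _ _ |>.trans natDegree_X_le)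
  · simp [hr, mul_comm w]

lemma exists_finset_card_le_zeros_on_line {n m : ℕ} (hmn : m < n) {a w : ℂ} {c : ℝ} (hc : c ≠ 0)
    (hw : a * w ^ n = c) {u : ℂ → ℝ} {r : ℝ[X]} (hdeg : r.natDegree ≤ m)
    (hr : ∀ t : ℝ, r.eval t = u (t * w)) :
    ∃ T : Finset ℝ, T.card ≤ m + 2 ∧ ∀ t : ℝ, a * (t * w) ^ n + u (t * w) = 0 → t ∈ T := by
  refine ⟨(C c * X ^ n + r).roots.toFinset,
    (card_roots_toFinset_C_mul_X_pow_add_le n c r).trans (by lia), fun t ht => ?_⟩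
  rw [Multiset.mem_toFinset, mem_roots (C_mul_X_pow_add_ne_zero hc (hdeg.trans_lt hmn)), IsRoot.def,
    eval_add, eval_C_mul, eval_X_pow, hr, ← ofReal_inj]
  push_cast
  rw [← ht, ← hw]
  ring

lemma finite_and_ncard_le_card_mul_of_forall_exists_eq {α β γ : Type*} (f : α → β → γ) {S : Set γ}
    {W : Finset α} {k : ℕ} (hS : ∀ z ∈ S, ∃ w ∈ W, ∃ t, z = f w t)
    (hW : ∀ w ∈ W, ∃ T : Finset β, T.card ≤ k ∧ ∀ t, f w t ∈ S → t ∈ T) :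
    S.Finite ∧ S.ncard ≤ W.card * k := by
  classical
  choose! T hcard hmem using hW
  let F : Finset γ := W.biUnion fun w => (T w).image (f w)
  have hSF : S ⊆ F := by
    intro z hz
    obtain ⟨w, hw, t, rfl⟩ := hS z hz
    exact Finset.mem_biUnion.2 ⟨w, hw, Finset.mem_image_of_mem _ (hmem w hw t hz)⟩
  refine ⟨F.finite_toSet.subset hSF, ?_⟩
  calc S.ncard ≤ (F : Set γ).ncard := Set.ncard_le_ncard hSF F.finite_toSet
    _ = F.card := Set.ncard_coe_finset F
    _ ≤ W.card * k := Finset.card_biUnion_le_card_mul _ _ _ fun w hw =>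
        Finset.card_image_le.trans (hcard w hw)

lemma mul_add_two_le_two_mul_mul_sub_one_add {n m : ℕ} (hm : 2 ≤ m) (hn : 4 ≤ n) :
    n * (m + 2) ≤ 2 * m * (n - 1) + n := by
  obtain ⟨b, rfl⟩ := Nat.exists_eq_add_of_le' hn
  have hmb : 2 * (b + 2) ≤ m * (b + 2) := Nat.mul_le_mul_right _ hm
  rw [Nat.add_sub_assoc (by norm_num)]
  linarith

/-- The hypothesis on `u` holds, for example, for every real-valued polynomial of degree at most
`m` in `z` and `conj z`. -/
theorem descartes_upper_bound_general {n m : ℕ} (hmn : m < n) {a : ℂ} (ha : a ≠ 0) {u : ℂ → ℝ}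
    (hu : ∀ w : ℂ, ∃ r : ℝ[X], r.natDegree ≤ m ∧ ∀ t : ℝ, r.eval t = u (t * w)) :
    {z : ℂ | a * z ^ n + u z = 0}.Finite ∧
      {z : ℂ | a * z ^ n + u z = 0}.ncard ≤ n * (m + 2) := by
  have hn : 0 < n := Nat.zero_lt_of_lt hmn
  have zeros_on_lines : ∀ z ∈ {z : ℂ | a * z ^ n + u z = 0},
      ∃ w ∈ lineDirections n a, ∃ t : ℝ, z = t * w := by
    intro z hz
    refine exists_eq_ofReal_mul_of_im_mul_pow_eq_zero hn ha ?_
    rw [eq_neg_of_add_eq_zero_left hz, neg_im, ofReal_im, neg_zero]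
  have zeros_on_line : ∀ w ∈ lineDirections n a, ∃ T : Finset ℝ, T.card ≤ m + 2 ∧
      ∀ t : ℝ, (t * w : ℂ) ∈ {z : ℂ | a * z ^ n + u z = 0} → t ∈ T := by
    intro w hw
    obtain ⟨c, hc, hcw⟩ := exists_ofReal_eq_mul_pow_of_mem_lineDirections hn ha hw
    obtain ⟨r, hdeg, hr⟩ := hu w
    exact exists_finset_card_le_zeros_on_line hmn hc hcw hdeg hr
  obtain ⟨hfin, hcard⟩ := finite_and_ncard_le_card_mul_of_forall_exists_eq
    (fun (w : ℂ) (t : ℝ) => (t * w : ℂ)) zeros_on_lines zeros_on_line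
  exact ⟨hfin, hcard.trans (Nat.mul_le_mul_right _ (card_lineDirections_le n a))⟩

/-- For `n > m`, `m ≥ 2`, `n ≥ 4`, `ε > 0` and `q` a complex polynomial of degree `m`, the
zero set of `ε z^n + q(z) + conj(q(z))` is finite with cardinality at most `n(m+2)`, which
is at most `2m(n−1) + n` (Descartes' rule of signs). -/
theorem descartes_upper_bound (n m : ℕ) (hm : 2 ≤ m) (hn : 4 ≤ n) (hmn : m < n)
    (ε : ℝ) (hε : 0 < ε) (q : Polynomial ℂ) (hq : q.degree = m) :
    {z : ℂ | (ε : ℂ) * z ^ n + q.eval z + (starRingEnd ℂ) (q.eval z) = 0}.Finite ∧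
    {z : ℂ | (ε : ℂ) * z ^ n + q.eval z + (starRingEnd ℂ) (q.eval z) = 0}.ncard ≤ n * (m + 2) ∧
    n * (m + 2) ≤ 2 * m * (n - 1) + n := by
  have restrict (w : ℂ) :
      ∃ r : ℝ[X], r.natDegree ≤ m ∧ ∀ t : ℝ, r.eval t = 2 * (q.eval (t * w)).re :=
    natDegree_eq_of_degree_eq_some hq ▸ exists_real_polynomial_eval_eq_two_mul_re q w
  have bound := descartes_upper_bound_general (u := fun z => 2 * (q.eval z).re) hmn
    (ofReal_ne_zero.2 hε.ne') restrict
  simp only [add_assoc, add_conj]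
  exact ⟨bound.1, bound.2, mul_add_two_le_two_mul_mul_sub_one_add hm hn⟩
end
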